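/- arXiv:2110.13197 — 7 statements merged into one kernel-verified Lean document; each statement's English description precedes it below -/
import Mathlib

section
/- Fix a constant 0 < ε < 1. For every δ > 0 there exists N such that for all integers n ≥ N and all integers r with 3 ≤ r < (2 log n)^{1/2} and rn even, the following holds: if G₁ and G₂ are drawn independently and uniformly at random from the set of r-regular simple graphs on the vertex set {1,…,n}, then for any fixed vertices v₁ of G₁ and v₂ of G₂, with probability at least 1 − δ/n, for every integer i with (1/2)·log n / log(r−1−ε) < i < (2/3 − ε)·log n / log(r−1) and for each j ∈ {1,2}, the number of edges of G_j with one endpoint in Q_{v_j,G_j}^i and the other endpoint in Q_{v_j,G_j}^{i+1} is at least (r − 1 − ε)·|Q_{v_j,G_j}^i|. -/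
/-- The type of 1-WL colors after `t` refinement rounds. -/
def WLColor : ℕ → Type
  | 0 => Unit
  | t + 1 => WLColor t × Multiset (WLColor t)

/-- The `t`-round 1-WL color of a vertex `v` in a finite simple graph `G`:
`c_0(v)` is a fixed constant, and `c_{t+1}(v) = (c_t(v), {{c_t(u) : u ∈ N(v)}})`. -/
noncomputable def wlColor {V : Type} [Finite V] (G : SimpleGraph V) : (t : ℕ) → V → WLColor t
  | 0, _ => ()
  | t + 1, v =>
    (wlColor G t v, ((Set.toFinite {u | G.Adj v u}).toFinset.val).map (wlColor G t))

/-- `ball G v h` is the set of vertices at shortest-path distance at most `h` from `v`. -/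
def ball {V : Type} (G : SimpleGraph V) (v : V) (h : ℕ) : Set V :=
  {u | G.Reachable v u ∧ G.dist v u ≤ h}

/-- `sphere G v k` is the set `Q_{v,G}^k` of vertices at shortest-path distance exactly `k`. -/
def sphere {V : Type} (G : SimpleGraph V) (v : V) (k : ℕ) : Set V :=
  {u | G.Reachable v u ∧ G.dist v u = k}

/-- A graph is `r`-regular if every vertex has exactly `r` neighbors. -/
def IsRegularGraph {V : Type} (G : SimpleGraph V) (r : ℕ) : Prop :=
  ∀ v : V, Nat.card {u : V // G.Adj v u} = r

lemma self_mem_ball {V : Type} (G : SimpleGraph V) (v : V) (h : ℕ) : v ∈ ball G v h :=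
  ⟨SimpleGraph.Reachable.refl v, by simp [SimpleGraph.dist_self]⟩

/-- The multiset of `t`-round WL colors of all vertices of `G`. -/
noncomputable def graphColorMultiset {V : Type} [Finite V] (G : SimpleGraph V) (t : ℕ) :
    Multiset (WLColor t) :=
  haveI := Fintype.ofFinite V
  Finset.univ.val.map (wlColor G t)

/-- The `(h,L)` subgraph-WL node representation of `w`: the multiset of `L`-round WL colors
of the vertices of the height-`h` rooted subgraph `B_G(w,h)`, computed within that subgraph. -/
noncomputable def subgraphWLNodeRep {V : Type} [Finite V] (G : SimpleGraph V) (h L : ℕ)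
    (w : V) : Multiset (WLColor L) :=
  graphColorMultiset (G.induce (ball G w h)) L

/-- The `(h,L)` subgraph-WL graph representation of `G`. -/
noncomputable def subgraphWLGraphRep {V : Type} [Finite V] (G : SimpleGraph V) (h L : ℕ) :
    Multiset (Multiset (WLColor L)) :=
  haveI := Fintype.ofFinite V
  Finset.univ.val.map (subgraphWLNodeRep G h L)

/-- `a_{v,G}^{i,k}`: the number of vertices in `Q_{v,G}^{k+1}` with exactly `i` neighbors in
`Q_{v,G}^k`.  The edge configuration `C_{v,G}^k` is the sequence `i ↦ a_{v,G}^{i,k}` (`i ≥ 1`). -/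
noncomputable def edgeConfig {V : Type} (G : SimpleGraph V) (v : V) (k i : ℕ) : ℕ :=
  Nat.card {u : V // u ∈ sphere G v (k + 1) ∧
    Nat.card {w : V // w ∈ sphere G v k ∧ G.Adj u w} = i}

/-- The number of edges of `G` with one endpoint in `Q_{v,G}^i` and the other in `Q_{v,G}^{i+1}`. -/
noncomputable def crossEdges {V : Type} (G : SimpleGraph V) (v : V) (i : ℕ) : ℕ :=
  Nat.card {p : V × V // p.1 ∈ sphere G v i ∧ p.2 ∈ sphere G v (i + 1) ∧ G.Adj p.1 p.2}

section Helpers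
open Classical Finset
set_option linter.unusedSectionVars false

variable {V : Type} [Fintype V]

/-- Neighbour finset. -/
noncomputable def nbr (G : SimpleGraph V) (x : V) : Finset V := univ.filter (fun y => G.Adj x y)

lemma mem_nbr (G : SimpleGraph V) (x y : V) : y ∈ nbr G x ↔ G.Adj x y := by simp [nbr]

lemma reg_iff (G : SimpleGraph V) (r : ℕ) : IsRegularGraph G r ↔ ∀ x, (nbr G x).card = r := by
  unfold IsRegularGraph nbr
  simp only [Nat.card_eq_fintype_card, Fintype.card_subtype]

/-- The finset of regular graphs. -/
noncomputable def regs (V : Type) [Fintype V] (r : ℕ) : Finset (SimpleGraph V) :=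
  univ.filter (fun G => IsRegularGraph G r)

/-- The edges of `G` touching `S`. -/
def key (S : Finset V) (G : SimpleGraph V) : Set (V × V) := {p | p.1 ∈ S ∧ G.Adj p.1 p.2}

lemma key_eq_iff (S : Finset V) (G H : SimpleGraph V) :
    key S G = key S H ↔ ∀ x ∈ S, ∀ y, (G.Adj x y ↔ H.Adj x y) := by
  constructor
  · intro h x hx y
    have : (x, y) ∈ key S G ↔ (x, y) ∈ key S H := by rw [h]
    simpa [key, hx] using this
  · intro h
    ext ⟨x, y⟩
    simp only [key, Set.mem_ofPred_eq]
    constructor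
    · rintro ⟨a, b⟩; exact ⟨a, (h x a y).1 b⟩
    · rintro ⟨a, b⟩; exact ⟨a, (h x a y).2 b⟩

/-- The class of `G₀` when the edges touching `S` are known. -/
noncomputable def cls (r : ℕ) (S : Finset V) (G₀ : SimpleGraph V) : Finset (SimpleGraph V) :=
  (regs V r).filter (fun G => key S G = key S G₀)

/-- Switching `wa, xy` to `wx, ay`. -/
def sw (G : SimpleGraph V) (w a x y : V) : SimpleGraph V :=
  SimpleGraph.fromRel (fun p q => (G.Adj p q ∧ s(p, q) ≠ s(w, a) ∧ s(p, q) ≠ s(x, y)) ∨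
    s(p, q) = s(w, x) ∨ s(p, q) = s(a, y))

lemma sw_adj (G : SimpleGraph V) (w a x y p q : V) (hwx : w ≠ x) (hay : a ≠ y) :
    (sw G w a x y).Adj p q ↔ ((G.Adj p q ∧ s(p, q) ≠ s(w, a) ∧ s(p, q) ≠ s(x, y)) ∨
    s(p, q) = s(w, x) ∨ s(p, q) = s(a, y)) := by
  unfold sw
  rw [SimpleGraph.fromRel_adj]
  have := G.adj_comm p q
  have h2 : G.Adj p q → p ≠ q := fun h => h.ne
  rw [Sym2.eq_swap (a := q) (b := p), this]
  constructor
  · rintro ⟨_, h | h⟩ <;> exact h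
  · intro h
    refine ⟨?_, Or.inl h⟩
    rintro rfl
    simp only [Sym2.eq_iff] at h
    rcases h with h | h | h
    · exact G.loopless.irrefl _ h.1
    · grind
    · grind

/-- Admissible switching partners. -/
noncomputable def prt (G : SimpleGraph V) (S : Finset V) (w a : V) : Finset (V × V) :=
  univ.filter (fun p => G.Adj p.1 p.2 ∧ p.1 ∉ S ∧ p.2 ∉ S ∧ p.1 ≠ w ∧ p.1 ≠ a ∧ p.2 ≠ w ∧
    p.2 ≠ a ∧ ¬ G.Adj w p.1 ∧ ¬ G.Adj a p.2)

lemma card_adj_left (G : SimpleGraph V) (r : ℕ) (hG : IsRegularGraph G r) (U : Finset V) :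
    (univ.filter (fun p : V × V => G.Adj p.1 p.2 ∧ p.1 ∈ U)).card = r * U.card := by
  rw [reg_iff] at hG
  have : univ.filter (fun p : V × V => G.Adj p.1 p.2 ∧ p.1 ∈ U)
      = (U.sigma (fun x => nbr G x)).map (Equiv.sigmaEquivProd V V).toEmbedding := by
    ext ⟨x, y⟩
    simp only [mem_filter, mem_univ, true_and, mem_map, mem_sigma, mem_nbr]
    constructor
    · rintro ⟨h1, h2⟩; exact ⟨⟨x, y⟩, ⟨h2, h1⟩, rfl⟩
    · rintro ⟨⟨x', y'⟩, ⟨h2, h1⟩, h⟩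
      simp at h
      obtain ⟨rfl, rfl⟩ := h
      exact ⟨h1, h2⟩
  rw [this, card_map, card_sigma, Finset.sum_congr rfl (fun x _ => hG x)]
  simp [mul_comm]

lemma card_adj_right (G : SimpleGraph V) (r : ℕ) (hG : IsRegularGraph G r) (U : Finset V) :
    (univ.filter (fun p : V × V => G.Adj p.1 p.2 ∧ p.2 ∈ U)).card = r * U.card := by
  rw [← card_adj_left G r hG U]
  refine Finset.card_bij (fun p _ => (p.2, p.1)) ?_ ?_ ?_
  · simp only [mem_filter, mem_univ, true_and]
    rintro p ⟨h1, h2⟩; exact ⟨h1.symm, h2⟩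
  · rintro ⟨a, b⟩ _ ⟨c, d⟩ _ h; simp at h; simp [h]
  · rintro ⟨a, b⟩ h
    simp only [mem_filter, mem_univ, true_and] at h
    exact ⟨(b, a), by simp [h.1.symm, h.2], rfl⟩

lemma prt_card (G : SimpleGraph V) (r : ℕ) (hG : IsRegularGraph G r) (S : Finset V) (w a : V) :
    r * Fintype.card V ≤ (prt G S w a).card + 2 * (r * (S.card + 2 + r)) := by
  have h0 := card_adj_left G r hG univ
  have hreg := (reg_iff G r).1 hG
  have h1 := card_adj_left G r hG (S ∪ {w, a} ∪ nbr G w)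
  have h2 := card_adj_right G r hG (S ∪ {w, a} ∪ nbr G a)
  have hU : ∀ b, (S ∪ {w, a} ∪ nbr G b).card ≤ S.card + 2 + r := by
    intro b
    refine (card_union_le _ _).trans ?_
    rw [hreg b]
    have := card_union_le S {w, a}
    have : ({w, a} : Finset V).card ≤ 2 := card_le_two
    omega
  have hsub : univ.filter (fun p : V × V => G.Adj p.1 p.2 ∧ p.1 ∈ (univ : Finset V)) ⊆
      prt G S w a ∪ (univ.filter (fun p : V × V => G.Adj p.1 p.2 ∧ p.1 ∈ S ∪ {w, a} ∪ nbr G w) ∪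
      univ.filter (fun p : V × V => G.Adj p.1 p.2 ∧ p.2 ∈ S ∪ {w, a} ∪ nbr G a)) := by
    rintro ⟨x, y⟩ h
    simp only [mem_filter, mem_univ, true_and, and_true, mem_union, prt, mem_insert,
      mem_singleton, mem_nbr] at h ⊢
    tauto
  have h3 := (card_le_card hsub).trans (card_union_le _ _)
  have h4 := card_union_le (univ.filter (fun p : V × V => G.Adj p.1 p.2 ∧ p.1 ∈ S ∪ {w, a} ∪ nbr G w))
      (univ.filter (fun p : V × V => G.Adj p.1 p.2 ∧ p.2 ∈ S ∪ {w, a} ∪ nbr G a))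
  rw [h0] at h3
  rw [h1, h2] at h4
  have h5 := Nat.mul_le_mul_left r (hU w)
  have h6 := Nat.mul_le_mul_left r (hU a)
  rw [card_univ] at h3
  omega

lemma sw_reg (G : SimpleGraph V) (r : ℕ) (hG : IsRegularGraph G r) (S : Finset V) (w a : V)
    (hwa : G.Adj w a) (p : V × V) (hp : p ∈ prt G S w a) :
    IsRegularGraph (sw G w a p.1 p.2) r := by
  obtain ⟨x, y⟩ := p
  simp only [prt, mem_filter, mem_univ, true_and] at hp
  obtain ⟨hxy, -, -, h1, h2, h3, h4, h5, h6⟩ := hp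
  have hne := hwa.ne
  have hne2 := hxy.ne
  intro u
  rw [← hG u]
  have hsw : ∀ (c d : V), (∀ q, (sw G w a x y).Adj u q ↔ G.Adj u (Equiv.swap c d q)) →
      Nat.card {q // (sw G w a x y).Adj u q} = Nat.card {q // G.Adj u q} := by
    intro c d h
    exact Nat.card_congr ((Equiv.swap c d).subtypeEquiv h)
  have hwa' := hwa.symm
  have hxy' := hxy.symm
  have h5' : ¬ G.Adj x w := fun h => h5 h.symm
  have h6' : ¬ G.Adj y a := fun h => h6 h.symm
  by_cases hw : u = w
  · subst hw
    refine hsw a x fun q => ?_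
    rw [sw_adj _ _ _ _ _ _ _ (Ne.symm h1) (Ne.symm h4)]
    simp only [Sym2.eq_iff, Equiv.swap_apply_def]
    grind
  by_cases ha : u = a
  · subst ha
    refine hsw w y fun q => ?_
    rw [sw_adj _ _ _ _ _ _ _ (Ne.symm h1) (Ne.symm h4)]
    simp only [Sym2.eq_iff, Equiv.swap_apply_def]
    grind
  by_cases hx : u = x
  · subst hx
    refine hsw w y fun q => ?_
    rw [sw_adj _ _ _ _ _ _ _ (Ne.symm h1) (Ne.symm h4)]
    simp only [Sym2.eq_iff, Equiv.swap_apply_def]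
    grind
  by_cases hy : u = y
  · subst hy
    refine hsw a x fun q => ?_
    rw [sw_adj _ _ _ _ _ _ _ (Ne.symm h1) (Ne.symm h4)]
    simp only [Sym2.eq_iff, Equiv.swap_apply_def]
    grind
  refine hsw u u fun q => ?_
  rw [sw_adj _ _ _ _ _ _ _ (Ne.symm h1) (Ne.symm h4)]
  simp only [Sym2.eq_iff, Equiv.swap_self, Equiv.refl_apply]
  grind

lemma sw_inj (G H : SimpleGraph V) (S : Finset V) (w a : V)
    (hwa : G.Adj w a) (hwa' : H.Adj w a) (p : V × V) (hp : p ∈ prt G S w a)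
    (hp' : p ∈ prt H S w a) (h : sw G w a p.1 p.2 = sw H w a p.1 p.2) : G = H := by
  obtain ⟨x, y⟩ := p
  simp only [prt, mem_filter, mem_univ, true_and] at hp hp'
  obtain ⟨hxy, -, -, h1, h2, h3, h4, h5, h6⟩ := hp
  obtain ⟨hxy', -, -, -, -, -, -, h5', h6'⟩ := hp'
  ext u q
  have := congrArg (fun K => SimpleGraph.Adj K u q) h
  simp only [sw_adj _ _ _ _ _ _ _ (Ne.symm h1) (Ne.symm h4)] at this
  simp only [Sym2.eq_iff, ne_eq, eq_iff_iff] at this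
  by_cases e1 : (u = w ∧ q = a ∨ u = a ∧ q = w)
  · rcases e1 with ⟨rfl, rfl⟩ | ⟨rfl, rfl⟩
    · exact iff_of_true hwa hwa'
    · exact iff_of_true hwa.symm hwa'.symm
  by_cases e2 : (u = x ∧ q = y ∨ u = y ∧ q = x)
  · rcases e2 with ⟨rfl, rfl⟩ | ⟨rfl, rfl⟩
    · exact iff_of_true hxy hxy'
    · exact iff_of_true hxy.symm hxy'.symm
  by_cases e3 : (u = w ∧ q = x ∨ u = x ∧ q = w)
  · rcases e3 with ⟨rfl, rfl⟩ | ⟨rfl, rfl⟩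
    · exact iff_of_false h5 h5'
    · exact iff_of_false (fun h => h5 h.symm) (fun h => h5' h.symm)
  by_cases e4 : (u = a ∧ q = y ∨ u = y ∧ q = a)
  · rcases e4 with ⟨rfl, rfl⟩ | ⟨rfl, rfl⟩
    · exact iff_of_false h6 h6'
    · exact iff_of_false (fun h => h6 h.symm) (fun h => h6' h.symm)
  simpa only [e1, e2, e3, e4, not_false_eq_true, and_true, or_false] using this

lemma switch_count (r : ℕ) (S : Finset V) (G₀ : SimpleGraph V) (w a : V) (hw : w ∉ S)
    (ha : a ∉ S) (A : Finset V) (haA : a ∉ A) :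
    ((cls r S G₀).filter (fun G => ∀ u ∈ insert a A, G.Adj w u)).card * (r * Fintype.card V)
      ≤ ((cls r S G₀).filter (fun G => ∀ u ∈ A, G.Adj w u)).card * (r * r) +
      ((cls r S G₀).filter (fun G => ∀ u ∈ insert a A, G.Adj w u)).card *
        (2 * (r * (S.card + 2 + r))) := by
  set Ba := (cls r S G₀).filter (fun G => ∀ u ∈ insert a A, G.Adj w u) with hBa
  set B := (cls r S G₀).filter (fun G => ∀ u ∈ A, G.Adj w u) with hB
  have memBa : ∀ G, G ∈ Ba ↔ (IsRegularGraph G r ∧ key S G = key S G₀) ∧ G.Adj w a ∧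
      ∀ u ∈ A, G.Adj w u := by
    intro G; simp [hBa, cls, regs]
  have memB : ∀ G, G ∈ B ↔ (IsRegularGraph G r ∧ key S G = key S G₀) ∧
      ∀ u ∈ A, G.Adj w u := by
    intro G; simp [hB, cls, regs]
  have hswB : ∀ G ∈ Ba, ∀ p ∈ prt G S w a, sw G w a p.1 p.2 ∈ B := by
    intro G hG p hp
    rw [memBa] at hG
    obtain ⟨⟨hG1, hG2⟩, hG3, hG4⟩ := hG
    rw [memB]
    refine ⟨⟨sw_reg G r hG1 S w a hG3 p hp, ?_⟩, ?_⟩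
    · rw [← hG2, key_eq_iff]
      intro c hc d
      simp only [prt, mem_filter, mem_univ, true_and] at hp
      rw [sw_adj _ _ _ _ _ _ _ (Ne.symm hp.2.2.2.1) (Ne.symm hp.2.2.2.2.2.2.1)]
      simp only [Sym2.eq_iff]
      grind
    · intro u hu
      have hu' := hG4 u hu
      simp only [prt, mem_filter, mem_univ, true_and] at hp
      rw [sw_adj _ _ _ _ _ _ _ (Ne.symm hp.2.2.2.1) (Ne.symm hp.2.2.2.2.2.2.1)]
      simp only [Sym2.eq_iff]
      have := hG3.ne
      grind
  have hcount : (Ba.sigma (fun G => prt G S w a)).card ≤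
      (B.sigma (fun G => nbr G w ×ˢ nbr G a)).card := by
    refine Finset.card_le_card_of_injOn (fun q => ⟨sw q.1 w a q.2.1 q.2.2, q.2⟩) ?_ ?_
    · rintro ⟨G, p⟩ hq
      simp only [coe_sigma, Set.mem_sigma_iff, mem_coe] at hq ⊢
      refine ⟨hswB G hq.1 p hq.2, ?_⟩
      have hp := hq.2
      simp only [prt, mem_filter, mem_univ, true_and] at hp
      simp only [mem_product, mem_nbr]
      constructor <;> rw [sw_adj _ _ _ _ _ _ _ (Ne.symm hp.2.2.2.1) (Ne.symm hp.2.2.2.2.2.2.1)]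
        <;> simp
    · rintro ⟨G, p⟩ hG ⟨H, q⟩ hH h
      simp only [coe_sigma, Set.mem_sigma_iff, mem_coe] at hG hH
      simp only [Sigma.mk.injEq, heq_eq_eq] at h
      obtain ⟨h1, rfl⟩ := h
      have := sw_inj G H S w a ((memBa G).1 hG.1).2.1 ((memBa H).1 hH.1).2.1 p hG.2 hH.2 h1
      subst this
      rfl
  rw [card_sigma, card_sigma] at hcount
  have e1 : ∑ G ∈ B, (nbr G w ×ˢ nbr G a).card = B.card * (r * r) := by
    rw [Finset.sum_const_nat]
    intro G hG
    have := (reg_iff G r).1 ((memB G).1 hG).1.1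
    rw [card_product, this, this]
  have e2 : Ba.card * (r * Fintype.card V) ≤
      ∑ G ∈ Ba, ((prt G S w a).card + 2 * (r * (S.card + 2 + r))) := by
    rw [← smul_eq_mul, ← Finset.sum_const]
    exact Finset.sum_le_sum fun G hG => prt_card G r ((memBa G).1 hG).1.1 S w a
  rw [Finset.sum_add_distrib, Finset.sum_const, smul_eq_mul] at e2
  omega

lemma star_bound (r : ℕ) (hr : 0 < r) (S : Finset V) (G₀ : SimpleGraph V) (w : V) (hw : w ∉ S)
    (hn : 4 * (S.card + 2 + r) ≤ Fintype.card V) (A : Finset V) (hA : ∀ a ∈ A, a ∉ S) :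
    (((cls r S G₀).filter (fun G => ∀ u ∈ A, G.Adj w u)).card : ℝ) ≤
      (2 * r / Fintype.card V) ^ A.card * (cls r S G₀).card := by
  induction A using Finset.induction_on with
  | empty => simp
  | insert a A ha ih =>
    have h1 := switch_count r S G₀ w a hw (hA a (mem_insert_self _ _)) A ha
    have ih' := ih (fun b hb => hA b (mem_insert_of_mem hb))
    set X := ((cls r S G₀).filter (fun G => ∀ u ∈ insert a A, G.Adj w u)).card
    set B := ((cls r S G₀).filter (fun G => ∀ u ∈ A, G.Adj w u)).card
    set n := Fintype.card V
    have h2 : X * (r * n) ≤ B * (2 * (r * r)) := by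
      have h3 : 2 * (2 * (r * (S.card + 2 + r))) ≤ r * n := by nlinarith
      have h4 := Nat.mul_le_mul_left X h3
      have h5 : X * (2 * (2 * (r * (S.card + 2 + r)))) = 2 * (X * (2 * (r * (S.card + 2 + r)))) := by
        ring
      have h6 : B * (2 * (r * r)) = 2 * (B * (r * r)) := by ring
      omega
    have h3 : (X : ℝ) * (r * n) ≤ B * (2 * (r * r)) := by exact_mod_cast h2
    have hn0 : (0 : ℝ) < n := by
      have : 0 < n := by omega
      exact_mod_cast this
    have hr0 : (0 : ℝ) < r := by exact_mod_cast hr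
    have h4 : (X : ℝ) ≤ 2 * r / n * B := by
      rw [div_mul_eq_mul_div, le_div_iff₀ hn0]
      have : (X * n : ℝ) * r ≤ (2 * r * B) * r := by nlinarith
      exact le_of_mul_le_mul_right this hr0
    rw [card_insert_of_notMem ha, pow_succ]
    calc (X : ℝ) ≤ 2 * r / n * B := h4
      _ ≤ 2 * r / n * ((2 * r / n) ^ A.card * (cls r S G₀).card) := by
          apply mul_le_mul_of_nonneg_left ih'; positivity
      _ = _ := by ring

/-- Discovered set. -/
noncomputable def dd (v : V) (G : SimpleGraph V) (S : Finset V) : Finset V :=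
  univ.filter (fun u => u = v ∨ u ∈ S ∨ ∃ s ∈ S, G.Adj s u)

/-- Number of ordered adjacent pairs. -/
noncomputable def cc (G : SimpleGraph V) (A B : Finset V) : ℝ :=
  ∑ x ∈ A, ∑ y ∈ B, if G.Adj x y then (1 : ℝ) else 0

/-- The excess. -/
noncomputable def Phi (r : ℕ) (v : V) (G : SimpleGraph V) (S : Finset V) : ℝ :=
  r * S.card - cc G S S / 2 - (dd v G S).card + 1

lemma cc_single (G : SimpleGraph V) (w : V) (B : Finset V) :
    ∑ y ∈ B, (if G.Adj w y then (1 : ℝ) else 0) = ((B.filter (fun y => G.Adj w y)).card : ℝ) := by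
  rw [Finset.sum_boole]

lemma cc_comm (G : SimpleGraph V) (A B : Finset V) : cc G A B = cc G B A := by
  unfold cc
  rw [Finset.sum_comm]
  simp only [G.adj_comm]

lemma subset_dd (v : V) (G : SimpleGraph V) (S : Finset V) : S ⊆ dd v G S := by
  intro x hx; simp [dd, hx]

lemma dd_congr (v : V) (G H : SimpleGraph V) (S : Finset V) (h : key S G = key S H) :
    dd v G S = dd v H S := by
  rw [key_eq_iff] at h
  ext u
  simp only [dd, mem_filter, mem_univ, true_and]
  constructor
  · rintro (h' | h' | ⟨s, hs, h'⟩)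
    · exact Or.inl h'
    · exact Or.inr (Or.inl h')
    · exact Or.inr (Or.inr ⟨s, hs, (h s hs u).1 h'⟩)
  · rintro (h' | h' | ⟨s, hs, h'⟩)
    · exact Or.inl h'
    · exact Or.inr (Or.inl h')
    · exact Or.inr (Or.inr ⟨s, hs, (h s hs u).2 h'⟩)

lemma cc_congr (G H : SimpleGraph V) (S : Finset V) (h : key S G = key S H) :
    cc G S S = cc H S S := by
  rw [key_eq_iff] at h
  unfold cc
  refine Finset.sum_congr rfl fun x hx => Finset.sum_congr rfl fun y _ => ?_
  simp only [h x hx y]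

lemma Phi_congr (r : ℕ) (v : V) (G H : SimpleGraph V) (S : Finset V) (h : key S G = key S H) :
    Phi r v G S = Phi r v H S := by
  unfold Phi
  rw [cc_congr G H S h, dd_congr v G H S h]

lemma dd_card (r : ℕ) (v : V) (G : SimpleGraph V) (S : Finset V) (hG : IsRegularGraph G r)
    (hv : v ∈ S ∨ S = ∅) : (dd v G S).card ≤ (r + 1) * S.card + 1 := by
  have hreg := (reg_iff G r).1 hG
  have : dd v G S ⊆ {v} ∪ (S ∪ S.biUnion (fun s => nbr G s)) := by
    intro u
    simp only [dd, mem_filter, mem_univ, true_and, mem_union, mem_biUnion, mem_nbr, mem_singleton]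
    tauto
  refine (card_le_card this).trans ((card_union_le _ _).trans ?_)
  have h1 := card_union_le S (S.biUnion (fun s => nbr G s))
  have h2 : (S.biUnion (fun s => nbr G s)).card ≤ S.card * r :=
    card_biUnion_le_card_mul _ _ _ (fun s _ => (hreg s).le)
  have h3 : (r + 1) * S.card = S.card * r + S.card := by ring
  simp only [card_singleton]
  omega

lemma dd_sdiff_card (r : ℕ) (v : V) (G : SimpleGraph V) (S : Finset V) (hG : IsRegularGraph G r) :
    (dd v G S \ S).card ≤ r * S.card + 1 := by
  have hreg := (reg_iff G r).1 hG
  have : dd v G S \ S ⊆ {v} ∪ (S.biUnion (fun s => nbr G s)) := by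
    intro u
    simp only [dd, mem_filter, mem_univ, true_and, mem_union, mem_biUnion, mem_nbr, mem_singleton,
      mem_sdiff]
    tauto
  refine (card_le_card this).trans ((card_union_le _ _).trans ?_)
  have h2 : (S.biUnion (fun s => nbr G s)).card ≤ S.card * r :=
    card_biUnion_le_card_mul _ _ _ (fun s _ => (hreg s).le)
  simp only [card_singleton]
  rw [mul_comm] at h2
  omega

lemma Phi_step (r : ℕ) (v : V) (G : SimpleGraph V) (S : Finset V) (hG : IsRegularGraph G r)
    (w : V) (hw : w ∉ S) (hwd : w ∈ dd v G S) :
    Phi r v G (insert w S) = Phi r v G S + (((dd v G S \ S).filter (fun y => G.Adj w y)).card : ℝ) := by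
  have hreg := (reg_iff G r).1 hG w
  have h1 : cc G (insert w S) (insert w S) = cc G S S +
      2 * ((S.filter (fun y => G.Adj w y)).card : ℝ) := by
    unfold cc
    rw [Finset.sum_insert hw, cc_single, Finset.filter_insert]
    simp only [SimpleGraph.irrefl, if_false]
    have : ∀ x ∈ S, ∑ y ∈ insert w S, (if G.Adj x y then (1 : ℝ) else 0) =
        (if G.Adj w x then (1 : ℝ) else 0) + ∑ y ∈ S, (if G.Adj x y then (1 : ℝ) else 0) := by
      intro x _
      rw [Finset.sum_insert hw]
      simp only [G.adj_comm]
    rw [Finset.sum_congr rfl this, Finset.sum_add_distrib, cc_single]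
    ring
  have h2 : dd v G (insert w S) = dd v G S ∪ (nbr G w \ dd v G S) := by
    rw [union_sdiff_self_eq_union]
    ext u
    simp only [dd, mem_filter, mem_univ, true_and, mem_insert, mem_union, mem_nbr] at hwd ⊢
    constructor
    · rintro (h | (rfl | h) | ⟨s, (rfl | hs), h⟩)
      · exact Or.inl (Or.inl h)
      · exact Or.inl hwd
      · exact Or.inl (Or.inr (Or.inl h))
      · exact Or.inr h
      · exact Or.inl (Or.inr (Or.inr ⟨s, hs, h⟩))
    · rintro ((h | h | ⟨s, hs, h⟩) | h)
      · exact Or.inl h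
      · exact Or.inr (Or.inl (Or.inr h))
      · exact Or.inr (Or.inr ⟨s, Or.inr hs, h⟩)
      · exact Or.inr (Or.inr ⟨w, Or.inl rfl, h⟩)
  have h3 : (dd v G (insert w S)).card = (dd v G S).card + (nbr G w \ dd v G S).card := by
    rw [h2, card_union_of_disjoint disjoint_sdiff]
  have h4 : r = (S.filter (fun y => G.Adj w y)).card +
      ((dd v G S \ S).filter (fun y => G.Adj w y)).card + (nbr G w \ dd v G S).card := by
    rw [← hreg, ← card_union_of_disjoint, ← card_union_of_disjoint]
    · congr 1
      ext u
      have := @subset_dd V _ v G S u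
      simp only [mem_nbr, mem_union, mem_filter, mem_sdiff]
      tauto
    · rw [disjoint_left]
      intro u
      have := @subset_dd V _ v G S u
      simp only [mem_nbr, mem_union, mem_filter, mem_sdiff]
      tauto
    · rw [disjoint_left]
      intro u
      simp only [mem_filter, mem_sdiff]
      tauto
  unfold Phi
  rw [h1, h3, card_insert_of_notMem hw]
  have h5 : (r : ℝ) = (S.filter (fun y => G.Adj w y)).card +
      ((dd v G S \ S).filter (fun y => G.Adj w y)).card + (nbr G w \ dd v G S).card := by
    exact_mod_cast h4
  push_cast
  linarith

/-- The supermartingale. -/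
noncomputable def FF (lam mu : ℝ) (r : ℕ) (v : V) (G : SimpleGraph V) (S : Finset V) : ℝ :=
  Real.exp (lam * Phi r v G S - mu * S.card)

lemma one_step (lam mu : ℝ) (hl : 0 ≤ lam) (r : ℕ) (hr : 0 < r) (v : V) (G₀ : SimpleGraph V)
    (S : Finset V) (w : V) (hw : w ∉ S) (hwd : w ∈ dd v G₀ S)
    (hn : 4 * (S.card + 2 + r) ≤ Fintype.card V)
    (hmu : Real.exp lam * (2 * r / Fintype.card V) * (r * S.card + 1) ≤ mu) :
    ∑ G ∈ cls r S G₀, FF lam mu r v G (insert w S) ≤ ∑ G ∈ cls r S G₀, FF lam mu r v G S := by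
  rcases (cls r S G₀).eq_empty_or_nonempty with he | ⟨G₁, hG₁⟩
  · rw [he]; simp
  have memc : ∀ G, G ∈ cls r S G₀ ↔ IsRegularGraph G r ∧ key S G = key S G₀ := by
    intro G; simp [cls, regs]
  set D := dd v G₀ S \ S with hD
  set q : ℝ := 2 * r / Fintype.card V with hq
  have hq0 : 0 ≤ q := by positivity
  set t : ℝ := Real.exp lam - 1 with ht
  have ht0 : 0 ≤ t := by have := Real.add_one_le_exp lam; linarith
  have hDc : (D.card : ℝ) ≤ r * S.card + 1 := by
    have hG := (memc G₁).1 hG₁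
    have := dd_sdiff_card r v G₁ S hG.1
    rw [dd_congr v G₁ G₀ S hG.2] at this
    exact_mod_cast this
  have e1 : ∀ G ∈ cls r S G₀, FF lam mu r v G (insert w S) =
      Real.exp (lam * Phi r v G₀ S - mu * S.card) * Real.exp (-mu) *
      ∑ A ∈ D.powerset, t ^ A.card * (if ∀ u ∈ A, G.Adj w u then (1 : ℝ) else 0) := by
    intro G hG
    rw [memc] at hG
    have hd := dd_congr v G G₀ S hG.2
    have s1 : ∑ A ∈ D.powerset, t ^ A.card * (if ∀ u ∈ A, G.Adj w u then (1 : ℝ) else 0) =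
        Real.exp lam ^ (D.filter (fun y => G.Adj w y)).card := by
      have : Real.exp lam = t + 1 := by rw [ht]; ring
      rw [this, ← Finset.sum_pow_mul_eq_add_pow]
      simp only [one_pow, mul_one, mul_ite, mul_zero]
      rw [← Finset.sum_filter]
      refine Finset.sum_congr ?_ fun _ _ => rfl
      ext A
      simp only [mem_filter, mem_powerset, subset_iff]
      constructor
      · rintro ⟨h1, h2⟩ x hx; exact ⟨h1 hx, h2 x hx⟩
      · intro h; exact ⟨fun x hx => (h hx).1, fun x hx => (h hx).2⟩
    rw [s1, ← Real.exp_nat_mul, ← Real.exp_add, ← Real.exp_add]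
    unfold FF
    rw [Phi_step r v G S hG.1 w hw (by rw [hd]; exact hwd), hd, Phi_congr r v G G₀ S hG.2,
      card_insert_of_notMem hw]
    congr 1
    push_cast
    ring
  have e2 : ∀ G ∈ cls r S G₀, FF lam mu r v G S =
      Real.exp (lam * Phi r v G₀ S - mu * S.card) := by
    intro G hG
    rw [memc] at hG
    unfold FF
    rw [Phi_congr r v G G₀ S hG.2]
  rw [Finset.sum_congr rfl e1, Finset.sum_congr rfl e2, ← Finset.mul_sum, Finset.sum_const,
    nsmul_eq_mul, mul_comm ((cls r S G₀).card : ℝ), mul_assoc]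
  apply mul_le_mul_of_nonneg_left _ (Real.exp_pos _).le
  rw [Finset.sum_comm]
  have e3 : ∑ A ∈ D.powerset, ∑ G ∈ cls r S G₀,
      t ^ A.card * (if ∀ u ∈ A, G.Adj w u then (1 : ℝ) else 0) ≤
      ∑ A ∈ D.powerset, (t * q) ^ A.card * 1 ^ (D.card - A.card) * (cls r S G₀).card := by
    refine Finset.sum_le_sum fun A hA => ?_
    rw [← Finset.mul_sum, Finset.sum_boole, mul_pow, one_pow, mul_one, mul_assoc]
    apply mul_le_mul_of_nonneg_left _ (by positivity)
    refine star_bound r hr S G₀ w hw hn A fun a ha => ?_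
    exact (mem_sdiff.1 (mem_powerset.1 hA ha)).2
  rw [← Finset.sum_mul, Finset.sum_pow_mul_eq_add_pow] at e3
  have e4 : (t * q + 1) ^ D.card ≤ Real.exp mu := by
    calc (t * q + 1) ^ D.card ≤ Real.exp (t * q) ^ D.card := by
          apply pow_le_pow_left₀ (by positivity) (Real.add_one_le_exp _)
      _ = Real.exp (D.card * (t * q)) := by rw [Real.exp_nat_mul]
      _ ≤ Real.exp mu := by
          apply Real.exp_le_exp.2
          refine le_trans ?_ hmu
          calc (D.card : ℝ) * (t * q) ≤ (r * S.card + 1) * (Real.exp lam * q) := by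
                apply mul_le_mul hDc _ (by positivity) (by positivity)
                apply mul_le_mul_of_nonneg_right _ hq0
                rw [ht]; linarith
            _ = _ := by ring
  calc Real.exp (-mu) * _ ≤ Real.exp (-mu) * ((t * q + 1) ^ D.card * (cls r S G₀).card) :=
        mul_le_mul_of_nonneg_left e3 (Real.exp_pos _).le
    _ ≤ Real.exp (-mu) * (Real.exp mu * (cls r S G₀).card) := by gcongr
    _ = (cls r S G₀).card := by
        rw [← mul_assoc, ← Real.exp_add]; simp

lemma key_mono (S T : Finset V) (h : S ⊆ T) (G H : SimpleGraph V) (hk : key T G = key T H) :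
    key S G = key S H := by
  rw [key_eq_iff] at *
  exact fun x hx => hk x (h hx)

lemma sum_fiber_le {α β : Type*} (C : Finset α) (k : α → β) (f g : α → ℝ)
    (h : ∀ a ∈ C, ∀ T : Finset α, (∀ x, x ∈ T ↔ x ∈ C ∧ k x = k a) →
      ∑ x ∈ T, f x ≤ ∑ x ∈ T, g x) :
    ∑ x ∈ C, f x ≤ ∑ x ∈ C, g x := by
  rw [← Finset.sum_fiberwise_of_maps_to (s := C) (t := C.image k) (g := k)
    (fun x hx => mem_image_of_mem k hx) f,
    ← Finset.sum_fiberwise_of_maps_to (s := C) (t := C.image k) (g := k)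
    (fun x hx => mem_image_of_mem k hx) g]
  refine Finset.sum_le_sum fun b hb => ?_
  obtain ⟨a, ha, rfl⟩ := mem_image.1 hb
  exact h a ha _ (fun x => by simp)

lemma multi_step (lam mu : ℝ) (hl : 0 ≤ lam) (r : ℕ) (hr : 0 < r) (v : V) (G₀ : SimpleGraph V)
    (S : Finset V) (m : ℕ)
    (hn : 4 * (m + 2 + r) ≤ Fintype.card V)
    (hmu : Real.exp lam * (2 * r / Fintype.card V) * (r * m + 1) ≤ mu) (W : Finset V)
    (hW : ∀ w ∈ W, w ∉ S ∧ w ∈ dd v G₀ S) (hm : S.card + W.card ≤ m) :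
    ∑ G ∈ cls r S G₀, FF lam mu r v G (S ∪ W) ≤ ∑ G ∈ cls r S G₀, FF lam mu r v G S := by
  induction W using Finset.induction_on with
  | empty => simp
  | insert w W hw ih =>
    rw [card_insert_of_notMem hw] at hm
    refine le_trans ?_ (ih (fun x hx => hW x (mem_insert_of_mem hx)) (by omega))
    have hSW : (S ∪ W).card ≤ m := (card_union_le _ _).trans (by omega)
    apply sum_fiber_le _ (fun G => key (S ∪ W) G)
    intro G₁ hG₁ T hT
    have hG₁' : key S G₁ = key S G₀ := (mem_filter.1 hG₁).2
    have : T = cls r (S ∪ W) G₁ := by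
      ext G
      rw [hT]
      simp only [cls, mem_filter]
      constructor
      · rintro ⟨⟨h1, h2⟩, h3⟩; exact ⟨h1, h3⟩
      · rintro ⟨h1, h3⟩
        exact ⟨⟨h1, (key_mono S (S ∪ W) subset_union_left _ _ h3).trans hG₁'⟩, h3⟩
    rw [this, union_insert]
    apply one_step lam mu hl r hr v G₁ (S ∪ W) w
    · rw [mem_union, not_or]
      exact ⟨(hW w (mem_insert_self _ _)).1, hw⟩
    · have h1 := (hW w (mem_insert_self _ _)).2
      rw [← dd_congr v _ _ S hG₁'] at h1
      simp only [dd, mem_filter, mem_univ, true_and, mem_union] at h1 ⊢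
      rcases h1 with h1 | h1 | ⟨s, hs, h1⟩
      · exact Or.inl h1
      · exact Or.inr (Or.inl (Or.inl h1))
      · exact Or.inr (Or.inr ⟨s, Or.inl hs, h1⟩)
    · omega
    · refine le_trans ?_ hmu
      gcongr

/-- Balls: `bb v G (k+1)` is the ball of radius `k`. -/
noncomputable def bb (v : V) (G : SimpleGraph V) : ℕ → Finset V
  | 0 => ∅
  | k + 1 => dd v G (bb v G k)

/-- Spheres. -/
noncomputable def qq (v : V) (G : SimpleGraph V) (k : ℕ) : Finset V := bb v G (k + 1) \ bb v G k

lemma bb_mono_succ (v : V) (G : SimpleGraph V) (k : ℕ) : bb v G k ⊆ bb v G (k + 1) :=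
  subset_dd v G _

lemma bb_mono (v : V) (G : SimpleGraph V) : Monotone (bb v G) :=
  monotone_nat_of_le_succ (bb_mono_succ v G)

lemma bb_congr (v : V) (G H : SimpleGraph V) (k : ℕ)
    (h : key (bb v G k) H = key (bb v G k) G) : ∀ j ≤ k + 1, bb v H j = bb v G j := by
  intro j
  induction j with
  | zero => intro _; rfl
  | succ j ih =>
    intro hj
    change dd v H (bb v H j) = dd v G (bb v G j)
    rw [ih (by omega)]
    exact dd_congr v H G _ (key_mono _ _ (bb_mono v G (by omega)) _ _ h)

lemma level_step (lam mu : ℝ) (hl : 0 ≤ lam) (r : ℕ) (hr : 0 < r) (v : V) (m : ℕ)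
    (hn : 4 * (m + 2 + r) ≤ Fintype.card V)
    (hmu : Real.exp lam * (2 * r / Fintype.card V) * (r * m + 1) ≤ mu) (k : ℕ)
    (hm : ∀ G ∈ regs V r, (bb v G (k + 1)).card ≤ m) :
    ∑ G ∈ regs V r, FF lam mu r v G (bb v G (k + 1)) ≤ ∑ G ∈ regs V r, FF lam mu r v G (bb v G k) := by
  apply sum_fiber_le _ (fun G => (bb v G k, key (bb v G k) G))
  intro G₀ hG₀ T hT
  have hTc : T = cls r (bb v G₀ k) G₀ := by
    ext G
    rw [hT]
    simp only [cls, mem_filter, Prod.mk.injEq]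
    constructor
    · rintro ⟨h1, h2, h3⟩; rw [h2] at h3; exact ⟨h1, h3⟩
    · rintro ⟨h1, h2⟩
      have := bb_congr v G₀ G k h2 k (by omega)
      refine ⟨h1, this, ?_⟩
      rw [this, h2]
  have hb : ∀ G ∈ T, bb v G k = bb v G₀ k ∧ bb v G (k + 1) = bb v G₀ k ∪ qq v G₀ k := by
    intro G hG
    have h2 : key (bb v G₀ k) G = key (bb v G₀ k) G₀ := by
      rw [hTc] at hG; exact (mem_filter.1 hG).2
    refine ⟨bb_congr v G₀ G k h2 k (by omega), ?_⟩
    rw [bb_congr v G₀ G k h2 (k + 1) le_rfl, qq, union_sdiff_of_subset (bb_mono_succ v G₀ k)]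
  have s1 : ∑ G ∈ T, FF lam mu r v G (bb v G (k + 1)) =
      ∑ G ∈ T, FF lam mu r v G (bb v G₀ k ∪ qq v G₀ k) :=
    Finset.sum_congr rfl (fun G hG => by rw [(hb G hG).2])
  have s2 : ∑ G ∈ T, FF lam mu r v G (bb v G k) = ∑ G ∈ T, FF lam mu r v G (bb v G₀ k) :=
    Finset.sum_congr rfl (fun G hG => by rw [(hb G hG).1])
  rw [s1, s2, hTc]
  apply multi_step lam mu hl r hr v G₀ _ m hn hmu
  · intro w hw
    simp only [qq, mem_sdiff] at hw
    exact ⟨hw.2, hw.1⟩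
  · have := hm G₀ hG₀
    have h2 := card_sdiff_add_card_eq_card (bb_mono_succ v G₀ k)
    unfold qq
    omega

lemma Phi_empty (r : ℕ) (v : V) (G : SimpleGraph V) : Phi r v G ∅ = 0 := by
  have : dd v G ∅ = {v} := by ext u; simp [dd]
  simp [Phi, this, cc]

lemma total_bound (lam mu : ℝ) (hl : 0 ≤ lam) (r : ℕ) (hr : 0 < r) (v : V) (m : ℕ)
    (hn : 4 * (m + 2 + r) ≤ Fintype.card V)
    (hmu : Real.exp lam * (2 * r / Fintype.card V) * (r * m + 1) ≤ mu) (k : ℕ)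
    (hm : ∀ G ∈ regs V r, (bb v G k).card ≤ m) :
    ∑ G ∈ regs V r, FF lam mu r v G (bb v G k) ≤ (regs V r).card := by
  induction k with
  | zero => simp [bb, FF, Phi_empty]
  | succ k ih =>
    exact (level_step lam mu hl r hr v m hn hmu k hm).trans
      (ih (fun G hG => (card_le_card (bb_mono_succ v G k)).trans (hm G hG)))

lemma markov_bound (lam mu : ℝ) (hl : 0 ≤ lam) (r : ℕ) (hr : 0 < r) (v : V) (m : ℕ)
    (hn : 4 * (m + 2 + r) ≤ Fintype.card V)
    (hmu : Real.exp lam * (2 * r / Fintype.card V) * (r * m + 1) ≤ mu) (k : ℕ)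
    (hm : ∀ G ∈ regs V r, (bb v G k).card ≤ m) (x : ℝ) :
    (((regs V r).filter (fun G => x ≤ Phi r v G (bb v G k))).card : ℝ) ≤
      Real.exp (mu * m - lam * x) * (regs V r).card := by
  have hmu0 : 0 ≤ mu := le_trans (by positivity) hmu
  have h1 := total_bound lam mu hl r hr v m hn hmu k hm
  have h2 : (((regs V r).filter (fun G => x ≤ Phi r v G (bb v G k))).card : ℝ) *
      Real.exp (lam * x - mu * m) ≤ ∑ G ∈ regs V r, FF lam mu r v G (bb v G k) := by
    rw [← nsmul_eq_mul, ← Finset.sum_const]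
    refine le_trans (Finset.sum_le_sum fun G hG => ?_)
      (Finset.sum_le_sum_of_subset_of_nonneg (filter_subset _ _)
        (fun G _ _ => (Real.exp_pos _).le))
    rw [mem_filter] at hG
    unfold FF
    apply Real.exp_le_exp.2
    have h3 : ((bb v G k).card : ℝ) ≤ m := by exact_mod_cast hm G hG.1
    have h4 := mul_le_mul_of_nonneg_left h3 hmu0
    have h5 := mul_le_mul_of_nonneg_left hG.2 hl
    linarith
  have h3 := h2.trans h1
  rw [← le_div_iff₀ (Real.exp_pos _)] at h3
  refine h3.trans (le_of_eq ?_)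
  rw [div_eq_mul_inv, ← Real.exp_neg, mul_comm]
  congr 2
  ring

lemma cc_union_left (G : SimpleGraph V) (A A' B : Finset V) (h : Disjoint A A') :
    cc G (A ∪ A') B = cc G A B + cc G A' B := by
  unfold cc; rw [Finset.sum_union h]

lemma cc_union_right (G : SimpleGraph V) (A B B' : Finset V) (h : Disjoint B B') :
    cc G A (B ∪ B') = cc G A B + cc G A B' := by
  rw [cc_comm, cc_union_left G B B' A h, cc_comm G B, cc_comm G B']

lemma cc_nonneg (G : SimpleGraph V) (A B : Finset V) : 0 ≤ cc G A B := by
  unfold cc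
  refine Finset.sum_nonneg fun _ _ => Finset.sum_nonneg fun _ _ => ?_
  split_ifs <;> norm_num

lemma cc_zero (G : SimpleGraph V) (A B : Finset V) (h : ∀ x ∈ A, ∀ y ∈ B, ¬ G.Adj x y) :
    cc G A B = 0 := by
  unfold cc
  refine Finset.sum_eq_zero fun x hx => Finset.sum_eq_zero fun y hy => ?_
  rw [if_neg (h x hx y hy)]

lemma cc_ge (G : SimpleGraph V) (A B : Finset V) (h : ∀ x ∈ A, ∃ y ∈ B, G.Adj x y) :
    (A.card : ℝ) ≤ cc G A B := by
  unfold cc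
  rw [← mul_one (A.card : ℝ), ← nsmul_eq_mul, ← Finset.sum_const]
  refine Finset.sum_le_sum fun x hx => ?_
  rw [cc_single]
  obtain ⟨y, hy, hxy⟩ := h x hx
  have : 0 < (B.filter (fun y => G.Adj x y)).card := card_pos.2 ⟨y, by simp [hy, hxy]⟩
  exact_mod_cast this

lemma cc_full (G : SimpleGraph V) (r : ℕ) (hG : IsRegularGraph G r) (A B : Finset V)
    (h : ∀ x ∈ A, ∀ y, G.Adj x y → y ∈ B) : cc G A B = r * A.card := by
  unfold cc
  have hreg := (reg_iff G r).1 hG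
  have : ∀ x ∈ A, ∑ y ∈ B, (if G.Adj x y then (1 : ℝ) else 0) = r := by
    intro x hx
    rw [cc_single, ← hreg x]
    congr 2
    ext y
    simp only [mem_filter, mem_nbr]
    exact ⟨fun h => h.2, fun h' => ⟨h x hx y h', h'⟩⟩
  rw [Finset.sum_congr rfl this, Finset.sum_const, nsmul_eq_mul, mul_comm]

lemma bb_adj (v : V) (G : SimpleGraph V) (k : ℕ) (x y : V) (hx : x ∈ bb v G k) (h : G.Adj x y) :
    y ∈ bb v G (k + 1) := by
  change y ∈ dd v G (bb v G k)
  simp only [dd, mem_filter, mem_univ, true_and]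
  exact Or.inr (Or.inr ⟨x, hx, h⟩)

lemma v_mem_bb (v : V) (G : SimpleGraph V) (k : ℕ) : v ∈ bb v G (k + 1) := by
  change v ∈ dd v G (bb v G k)
  simp [dd]

lemma cc_back (v : V) (G : SimpleGraph V) (k : ℕ) :
    cc G (qq v G (k + 1)) (bb v G (k + 1)) = cc G (qq v G k) (qq v G (k + 1)) := by
  have h : bb v G (k + 1) = bb v G k ∪ qq v G k := by
    rw [qq, union_sdiff_of_subset (bb_mono_succ v G k)]
  have hd : Disjoint (bb v G k) (qq v G k) := disjoint_sdiff
  conv_lhs => rw [h]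
  rw [cc_union_right _ _ _ _ hd, cc_comm G (qq v G k), cc_zero, zero_add]
  intro x hx y hy hxy
  simp only [qq, mem_sdiff] at hx
  exact hx.2 (bb_adj v G k y x hy hxy.symm)

lemma cc_out (v : V) (G : SimpleGraph V) (r : ℕ) (hG : IsRegularGraph G r) (k : ℕ) :
    r * ((qq v G k).card : ℝ) = cc G (qq v G k) (bb v G k) + cc G (qq v G k) (qq v G k) +
      cc G (qq v G k) (qq v G (k + 1)) := by
  have h : bb v G (k + 1) = bb v G k ∪ qq v G k := by
    rw [qq, union_sdiff_of_subset (bb_mono_succ v G k)]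
  have h2 : bb v G (k + 2) = (bb v G k ∪ qq v G k) ∪ qq v G (k + 1) := by
    rw [← h]
    conv_rhs => rw [qq, union_sdiff_of_subset (bb_mono_succ v G (k + 1))]
  have hd : Disjoint (bb v G k) (qq v G k) := disjoint_sdiff
  have hd2 : Disjoint (bb v G k ∪ qq v G k) (qq v G (k + 1)) := by
    rw [← h]; exact disjoint_sdiff
  rw [← cc_full G r hG (qq v G k) (bb v G (k + 2)), h2, cc_union_right _ _ _ _ hd2,
    cc_union_right _ _ _ _ hd]
  intro x hx y hxy
  exact bb_adj v G (k + 1) x y (mem_sdiff.1 hx).1 hxy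

lemma cc_ge_q (v : V) (G : SimpleGraph V) (k : ℕ) :
    ((qq v G (k + 1)).card : ℝ) ≤ cc G (qq v G k) (qq v G (k + 1)) := by
  rw [← cc_back]
  apply cc_ge
  intro x hx
  simp only [qq, mem_sdiff] at hx
  have h1 : x ∈ dd v G (bb v G (k + 1)) := hx.1
  simp only [dd, mem_filter, mem_univ, true_and] at h1
  rcases h1 with rfl | h1 | ⟨s, hs, h1⟩
  · exact absurd (v_mem_bb x G k) hx.2
  · exact absurd h1 hx.2
  · exact ⟨s, hs, h1.symm⟩

lemma bb_card_succ (v : V) (G : SimpleGraph V) (k : ℕ) :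
    ((bb v G (k + 1)).card : ℝ) = (bb v G k).card + (qq v G k).card := by
  have h2 := card_sdiff_add_card_eq_card (bb_mono_succ v G k)
  unfold qq
  rw [← h2]
  push_cast
  ring

lemma Phi_diff (v : V) (G : SimpleGraph V) (r : ℕ) (hG : IsRegularGraph G r) (k : ℕ) :
    Phi r v G (bb v G (k + 1)) - Phi r v G (bb v G k) =
      cc G (qq v G k) (qq v G (k + 1)) + cc G (qq v G k) (qq v G k) / 2 - (qq v G (k + 1)).card := by
  have h : bb v G (k + 1) = bb v G k ∪ qq v G k := by
    rw [qq, union_sdiff_of_subset (bb_mono_succ v G k)]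
  have hd : Disjoint (bb v G k) (qq v G k) := disjoint_sdiff
  have h1 : cc G (bb v G (k + 1)) (bb v G (k + 1)) = cc G (bb v G k) (bb v G k) +
      2 * cc G (qq v G k) (bb v G k) + cc G (qq v G k) (qq v G k) := by
    rw [h, cc_union_left _ _ _ _ hd, cc_union_right _ _ _ _ hd, cc_union_right _ _ _ _ hd,
      cc_comm G (bb v G k) (qq v G k)]
    ring
  have h2 := cc_out v G r hG k
  have h3 := bb_card_succ v G k
  have h4 := bb_card_succ v G (k + 1)
  unfold Phi
  change _ - ((bb v G (k + 1 + 1)).card : ℝ) + 1 - (_ - ((bb v G (k + 1)).card : ℝ) + 1) = _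
  rw [h1, h4, h3]
  linarith

lemma Phi_nonneg (v : V) (G : SimpleGraph V) (r : ℕ) (hG : IsRegularGraph G r) (k : ℕ) :
    0 ≤ Phi r v G (bb v G k) := by
  induction k with
  | zero => simp [bb, Phi_empty]
  | succ k ih =>
    have h1 := Phi_diff v G r hG k
    have h2 := cc_ge_q v G k
    have h3 := cc_nonneg G (qq v G k) (qq v G k)
    linarith

lemma growth (v : V) (G : SimpleGraph V) (r : ℕ) (hG : IsRegularGraph G r) (k : ℕ) :
    ((r : ℝ) - 1) * (qq v G (k + 1)).card - 2 * Phi r v G (bb v G (k + 2)) ≤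
      cc G (qq v G (k + 1)) (qq v G (k + 2)) ∧
    ((r : ℝ) - 1) * (qq v G (k + 1)).card - 2 * Phi r v G (bb v G (k + 2)) ≤
      (qq v G (k + 2)).card ∧
    ((qq v G (k + 2)).card : ℝ) ≤ ((r : ℝ) - 1) * (qq v G (k + 1)).card := by
  have h0 := Phi_nonneg v G r hG k
  have d0 := Phi_diff v G r hG k
  have d1 := Phi_diff v G r hG (k + 1)
  have o1 := cc_out v G r hG (k + 1)
  rw [cc_back] at o1
  have g0 := cc_ge_q v G k
  have g1 := cc_ge_q v G (k + 1)
  have n0 := cc_nonneg G (qq v G k) (qq v G k)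
  have n1 := cc_nonneg G (qq v G (k + 1)) (qq v G (k + 1))
  have e : k + 1 + 1 = k + 2 := rfl
  rw [e] at *
  refine ⟨?_, ?_, ?_⟩ <;> nlinarith

lemma qq_zero (v : V) (G : SimpleGraph V) : qq v G 0 = {v} := by
  ext u; simp [qq, bb, dd]

lemma qq_one (v : V) (G : SimpleGraph V) (r : ℕ) (hG : IsRegularGraph G r) :
    (qq v G 1).card = r := by
  rw [← (reg_iff G r).1 hG v]
  congr 1
  ext u
  have h0 : bb v G 1 = {v} := by ext u; simp [bb, dd]
  have h1 : u ∈ bb v G 2 ↔ u = v ∨ u = v ∨ G.Adj v u := by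
    change u ∈ dd v G (bb v G 1) ↔ _
    rw [h0]
    simp [dd]
  rw [qq, mem_sdiff, mem_nbr]
  change u ∈ bb v G 2 ∧ u ∉ bb v G 1 ↔ _
  rw [h1, h0, mem_singleton]
  have := G.loopless.irrefl v
  constructor
  · rintro ⟨h1, h2⟩
    grind
  · intro h
    have := h.ne
    grind

lemma bb_mem_iff (v : V) (G : SimpleGraph V) (k : ℕ) (u : V) :
    u ∈ bb v G (k + 1) ↔ G.Reachable v u ∧ G.dist v u ≤ k := by
  induction k generalizing u with
  | zero =>
    have : bb v G (0 + 1) = {v} := by ext u; simp [bb, dd]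
    rw [this, mem_singleton]
    constructor
    · rintro rfl
      simp
    · rintro ⟨h1, h2⟩
      exact ((h1.dist_eq_zero_iff).1 (by omega)).symm
  | succ k ih =>
    change u ∈ dd v G (bb v G (k + 1)) ↔ _
    simp only [dd, mem_filter, mem_univ, true_and, ih]
    constructor
    · rintro (rfl | h | ⟨s, hs, h⟩)
      · simp
      · exact ⟨h.1, by omega⟩
      · obtain ⟨p, hp⟩ := hs.1.exists_walk_length_eq_dist
        have := SimpleGraph.dist_le (p.concat h)
        rw [SimpleGraph.Walk.length_concat] at this
        exact ⟨⟨p.concat h⟩, by omega⟩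
    · rintro ⟨h1, h2⟩
      by_cases hk : G.dist v u ≤ k
      · exact Or.inr (Or.inl ⟨h1, hk⟩)
      right; right
      obtain ⟨p, hp⟩ := h1.symm.exists_walk_length_eq_dist
      cases p with
      | nil => simp at hk
      | @cons _ s _ h p =>
        refine ⟨s, ⟨⟨p.reverse⟩, ?_⟩, h.symm⟩
        have := SimpleGraph.dist_le p.reverse
        rw [SimpleGraph.Walk.length_reverse] at this
        rw [SimpleGraph.Walk.length_cons, SimpleGraph.dist_comm] at hp
        omega

lemma sphere_eq (v : V) (G : SimpleGraph V) (k : ℕ) (u : V) :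
    u ∈ sphere G v k ↔ u ∈ qq v G k := by
  have : u ∈ sphere G v k ↔ G.Reachable v u ∧ G.dist v u = k := Iff.rfl
  rw [this, qq, mem_sdiff, bb_mem_iff]
  cases k with
  | zero => simp [bb]
  | succ k =>
    rw [bb_mem_iff]
    constructor
    · rintro ⟨h1, h2⟩; exact ⟨⟨h1, by omega⟩, fun h => by omega⟩
    · rintro ⟨⟨h1, h2⟩, h3⟩
      refine ⟨h1, ?_⟩
      by_contra h
      exact h3 ⟨h1, by omega⟩

lemma sphere_card (v : V) (G : SimpleGraph V) (k : ℕ) :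
    Nat.card ↥(sphere G v k) = (qq v G k).card := by
  have : sphere G v k = (qq v G k : Set V) := by
    ext u; rw [sphere_eq]; simp
  rw [this]
  simp

lemma crossEdges_eq (v : V) (G : SimpleGraph V) (k : ℕ) :
    (crossEdges G v k : ℝ) = cc G (qq v G k) (qq v G (k + 1)) := by
  unfold crossEdges cc
  rw [← Finset.sum_product', Finset.sum_boole, Nat.card_eq_fintype_card, Fintype.card_subtype]
  congr 2
  ext p
  simp only [mem_filter, mem_univ, true_and, mem_product, sphere_eq]
  tauto

lemma qq_upper (v : V) (G : SimpleGraph V) (s : ℕ) (hs : 2 ≤ s) (hG : IsRegularGraph G (s + 1))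
    (k : ℕ) : ((qq v G (k + 1)).card : ℝ) ≤ 2 * (s : ℝ) ^ (k + 1) := by
  have hs' : (2 : ℝ) ≤ s := by exact_mod_cast hs
  induction k with
  | zero =>
    have := qq_one v G (s + 1) hG
    simp only [zero_add, this]
    push_cast
    linarith
  | succ k ih =>
    have h := (growth v G (s + 1) hG k).2.2
    push_cast at h
    have h2 : ((s : ℝ) + 1 - 1) * (qq v G (k + 1)).card ≤ s * (2 * (s : ℝ) ^ (k + 1)) := by
      rw [add_sub_cancel_right]
      exact mul_le_mul_of_nonneg_left ih (by positivity)
    refine h.trans (h2.trans (le_of_eq ?_))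
    ring

lemma bb_upper (v : V) (G : SimpleGraph V) (s : ℕ) (hs : 2 ≤ s) (hG : IsRegularGraph G (s + 1))
    (k : ℕ) : (bb v G (k + 1)).card ≤ 4 * s ^ k := by
  have hs' : (2 : ℝ) ≤ s := by exact_mod_cast hs
  have : ((bb v G (k + 1)).card : ℝ) ≤ 4 * (s : ℝ) ^ k := by
    induction k with
    | zero =>
      have : bb v G (0 + 1) = {v} := by ext u; simp [bb, dd]
      rw [this]; norm_num
    | succ k ih =>
      have h1 := bb_card_succ v G (k + 1)
      have h2 := qq_upper v G s hs hG k
      have h3 : (0 : ℝ) < (s : ℝ) ^ k := by positivity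
      rw [h1, pow_succ] at *
      nlinarith
  exact_mod_cast this

lemma det_growth (v : V) (G : SimpleGraph V) (s : ℕ) (hs : 2 ≤ s) (hG : IsRegularGraph G (s + 1))
    (T κ : ℝ) (hκ : 0 ≤ κ) (i : ℕ)
    (H : ∀ j ≤ i, ((s : ℝ) ^ j ≤ T → Phi (s + 1) v G (bb v G (j + 1)) < 3 / 2) ∧
      (T < (s : ℝ) ^ j → Phi (s + 1) v G (bb v G (j + 1)) < κ * (s : ℝ) ^ j)) (j : ℕ) (hj : j ≤ i) :
    (s : ℝ) ^ (j + 1) * (1 / 2 - κ * (j + 1)) ≤ (qq v G (j + 1)).card ∧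
    ((s : ℝ) ^ j ≤ T → 2 + (s : ℝ) ^ (j + 1) / 2 ≤ (qq v G (j + 1)).card) := by
  have hs' : (2 : ℝ) ≤ s := by exact_mod_cast hs
  induction j with
  | zero =>
    have := qq_one v G (s + 1) hG
    simp only [zero_add, this, pow_one]
    push_cast
    constructor
    · nlinarith
    · intro _; linarith
  | succ j ih =>
    have ih' := ih (by omega)
    have h := (growth v G (s + 1) hG j).2.1
    push_cast at h
    rw [add_sub_cancel_right] at h
    have hH := H (j + 1) hj
    have hp : (0 : ℝ) < (s : ℝ) ^ (j + 1) := by positivity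
    have hpp : (s : ℝ) ^ (j + 1 + 1) = s * (s : ℝ) ^ (j + 1) := by ring
    have key1 : (s : ℝ) ^ (j + 1) ≤ T → 2 + (s : ℝ) ^ (j + 1 + 1) / 2 ≤ (qq v G (j + 1 + 1)).card := by
      intro hT
      have h1 := hH.1 hT
      have hT' : (s : ℝ) ^ j ≤ T := by
        refine le_trans ?_ hT
        exact pow_le_pow_right₀ (by linarith) (by omega)
      have h2 := ih'.2 hT'
      have h3 : ((s * (qq v G (j + 1)).card : ℕ) : ℝ) < ((qq v G (j + 2)).card + 3 : ℕ) := by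
        push_cast
        change Phi (s + 1) v G (bb v G (j + 2)) < 3 / 2 at h1
        linarith
      have h4 : s * (qq v G (j + 1)).card ≤ (qq v G (j + 2)).card + 2 := by
        have : s * (qq v G (j + 1)).card < (qq v G (j + 2)).card + 3 := by exact_mod_cast h3
        omega
      have h5 : (s : ℝ) * (qq v G (j + 1)).card ≤ (qq v G (j + 2)).card + 2 := by exact_mod_cast h4
      change _ ≤ ((qq v G (j + 2)).card : ℝ)
      rw [hpp]
      nlinarith
    refine ⟨?_, key1⟩
    by_cases hT : (s : ℝ) ^ (j + 1) ≤ T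
    · have h1 := key1 hT
      have : 0 ≤ (s : ℝ) ^ (j + 1 + 1) * (κ * ((j + 1 : ℕ) + 1)) := by positivity
      linarith
    · have h1 := hH.2 (not_le.1 hT)
      change Phi (s + 1) v G (bb v G (j + 2)) < _ at h1
      have h2 := ih'.1
      have h3 := mul_le_mul_of_nonneg_left h2 (show (0 : ℝ) ≤ s by positivity)
      change _ ≤ ((qq v G (j + 2)).card : ℝ)
      rw [hpp]
      have h4 : 2 * (κ * (s : ℝ) ^ (j + 1)) ≤ s * (κ * (s : ℝ) ^ (j + 1)) :=
        mul_le_mul_of_nonneg_right hs' (by positivity)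
      push_cast
      linarith

lemma det_final (v : V) (G : SimpleGraph V) (s : ℕ) (hs : 2 ≤ s) (hG : IsRegularGraph G (s + 1))
    (T κ ε : ℝ) (hκ : 0 ≤ κ) (i : ℕ) (hi : 1 ≤ i) (hκi : κ * i ≤ 1 / 4) (hκε : 8 * κ ≤ ε)
    (hT : T < (s : ℝ) ^ i)
    (H : ∀ j ≤ i, ((s : ℝ) ^ j ≤ T → Phi (s + 1) v G (bb v G (j + 1)) < 3 / 2) ∧
      (T < (s : ℝ) ^ j → Phi (s + 1) v G (bb v G (j + 1)) < κ * (s : ℝ) ^ j)) :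
    ((s : ℝ) - ε) * (Nat.card ↥(sphere G v i) : ℝ) ≤ (crossEdges G v i : ℝ) := by
  obtain ⟨j, rfl⟩ : ∃ j, i = j + 1 := ⟨i - 1, by omega⟩
  rw [sphere_card, crossEdges_eq]
  have h1 := (det_growth v G s hs hG T κ hκ (j + 1) H j (by omega)).1
  have h2 := (growth v G (s + 1) hG j).1
  have h3 := (H (j + 1) le_rfl).2 hT
  change Phi (s + 1) v G (bb v G (j + 2)) < _ at h3
  push_cast at h2 hκi
  rw [add_sub_cancel_right] at h2
  have hp : (0 : ℝ) < (s : ℝ) ^ (j + 1) := by positivity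
  have h4 : (s : ℝ) ^ (j + 1) / 4 ≤ (qq v G (j + 1)).card := by
    refine le_trans ?_ h1
    nlinarith
  have h5 : 2 * (κ * (s : ℝ) ^ (j + 1)) ≤ ε * (qq v G (j + 1)).card := by
    have h6 : 8 * κ * ((s : ℝ) ^ (j + 1) / 4) ≤ ε * (qq v G (j + 1)).card :=
      mul_le_mul hκε h4 (by positivity) (by linarith)
    linarith
  change _ ≤ cc G (qq v G (j + 1)) (qq v G (j + 2))
  linarith

/-- The threshold at one level. -/
noncomputable def thr (L ε y : ℝ) : ℝ :=
  if y ≤ Real.exp (L / 16) then 3 / 2 else ε / (8 * L) * y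

lemma prob_level (s : ℕ) (hs : 2 ≤ s) (v : V) (L ε : ℝ) (hL : 1 ≤ L) (hε : 0 < ε)
    (hn : (Fintype.card V : ℝ) = Real.exp L) (hrL : ((s : ℝ) + 1) ^ 2 ≤ 2 * L)
    (c1 : 80 * L * Real.exp (-(L / 8)) ≤ 1) (c2 : 80 * L * Real.exp (-(L / 12)) ≤ ε / 64)
    (c3 : 9 / 8 * L - 1 ≤ ε / 64 * Real.exp (L / 16))
    (c4 : 16 * Real.exp (2 * L / 3) + 8 + 4 * L ≤ Real.exp L)
    (I : ℕ) (hI : (s : ℝ) ^ I ≤ Real.exp (2 * L / 3)) :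
    (((regs V (s + 1)).filter
      (fun G => thr L ε ((s : ℝ) ^ I) ≤ Phi (s + 1) v G (bb v G (I + 1)))).card : ℝ) ≤
      Real.exp (1 - 9 / 8 * L) * (regs V (s + 1)).card := by
  have hs' : (2 : ℝ) ≤ s := by exact_mod_cast hs
  set y : ℝ := (s : ℝ) ^ I with hy
  have hy1 : 1 ≤ y := one_le_pow₀ (by linarith)
  have hm : ∀ G ∈ regs V (s + 1), (bb v G (I + 1)).card ≤ 4 * s ^ I := by
    intro G hG
    exact bb_upper v G s hs (mem_filter.1 hG).2 I
  have hmy : ((4 * s ^ I : ℕ) : ℝ) = 4 * y := by push_cast; rfl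
  have hsL : (s : ℝ) + 1 ≤ L := by nlinarith
  have hcard : 4 * (4 * s ^ I + 2 + (s + 1)) ≤ Fintype.card V := by
    have : ((4 * (4 * s ^ I + 2 + (s + 1)) : ℕ) : ℝ) ≤ (Fintype.card V : ℝ) := by
      rw [hn]
      push_cast
      rw [← hy]
      linarith
    exact_mod_cast this
  have main : ∀ lam x : ℝ, 0 ≤ lam →
      80 * L * Real.exp lam * y ^ 2 * Real.exp (-L) - lam * x ≤ 1 - 9 / 8 * L →
      (((regs V (s + 1)).filter (fun G => x ≤ Phi (s + 1) v G (bb v G (I + 1)))).card : ℝ) ≤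
      Real.exp (1 - 9 / 8 * L) * (regs V (s + 1)).card := by
    intro lam x hlam hx
    have h := markov_bound lam (Real.exp lam * (2 * ((s + 1 : ℕ) : ℝ) / Fintype.card V) *
      (((s + 1 : ℕ) : ℝ) * ((4 * s ^ I : ℕ) : ℝ) + 1)) hlam (s + 1) (by omega) v (4 * s ^ I)
      hcard le_rfl (I + 1) hm x
    refine h.trans ?_
    apply mul_le_mul_of_nonneg_right _ (by positivity)
    apply Real.exp_le_exp.2
    refine le_trans ?_ hx
    apply sub_le_sub_right
    rw [hmy, hn, div_eq_mul_inv, ← Real.exp_neg]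
    push_cast
    have hE : 0 ≤ Real.exp lam * Real.exp (-L) := by positivity
    have h1 : 2 * ((s : ℝ) + 1) * (((s : ℝ) + 1) * (4 * y) + 1) * (4 * y) ≤ 80 * L * y ^ 2 := by
      have h2 : ((s : ℝ) + 1) * (4 * y) + 1 ≤ 5 * (((s : ℝ) + 1) * y) := by nlinarith
      calc 2 * ((s : ℝ) + 1) * (((s : ℝ) + 1) * (4 * y) + 1) * (4 * y)
          ≤ 2 * ((s : ℝ) + 1) * (5 * (((s : ℝ) + 1) * y)) * (4 * y) := by gcongr
        _ = 40 * y ^ 2 * (((s : ℝ) + 1) ^ 2) := by ring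
        _ ≤ 40 * y ^ 2 * (2 * L) := by gcongr
        _ = _ := by ring
    calc _ = (Real.exp lam * Real.exp (-L)) *
        (2 * ((s : ℝ) + 1) * (((s : ℝ) + 1) * (4 * y) + 1) * (4 * y)) := by ring
      _ ≤ (Real.exp lam * Real.exp (-L)) * (80 * L * y ^ 2) := mul_le_mul_of_nonneg_left h1 hE
      _ = _ := by ring
  unfold thr
  split_ifs with hc
  · apply main (3 / 4 * L) _ (by linarith)
    have h1 : y ^ 2 ≤ Real.exp (L / 8) := by
      calc y ^ 2 ≤ Real.exp (L / 16) ^ 2 := by gcongr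
        _ = Real.exp (L / 8) := by rw [← Real.exp_nat_mul]; congr 1; push_cast; ring
    have h2 : 80 * L * Real.exp (3 / 4 * L) * y ^ 2 * Real.exp (-L) ≤
        80 * L * Real.exp (-(L / 8)) := by
      calc 80 * L * Real.exp (3 / 4 * L) * y ^ 2 * Real.exp (-L)
          ≤ 80 * L * Real.exp (3 / 4 * L) * Real.exp (L / 8) * Real.exp (-L) := by gcongr
        _ = 80 * L * Real.exp (3 / 4 * L + L / 8 + -L) := by
            rw [Real.exp_add, Real.exp_add]; ring
        _ = _ := by congr 2; ring
    linarith
  · apply main (L / 4) _ (by linarith)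
    rw [not_le] at hc
    have h2 : 80 * L * Real.exp (L / 4) * y ^ 2 * Real.exp (-L) ≤
        80 * L * Real.exp (-(L / 12)) * y := by
      calc 80 * L * Real.exp (L / 4) * y ^ 2 * Real.exp (-L)
          = 80 * L * Real.exp (L / 4) * y * Real.exp (-L) * y := by ring
        _ ≤ 80 * L * Real.exp (L / 4) * Real.exp (2 * L / 3) * Real.exp (-L) * y := by gcongr
        _ = 80 * L * Real.exp (L / 4 + 2 * L / 3 + -L) * y := by
            rw [Real.exp_add, Real.exp_add]; ring
        _ = _ := by congr 3; ring
    have h3 : L / 4 * (ε / (8 * L) * y) = ε / 32 * y := by field_simp; ring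
    rw [h3]
    have h4 : 80 * L * Real.exp (-(L / 12)) * y ≤ ε / 64 * y :=
      mul_le_mul_of_nonneg_right c2 (by linarith)
    have h5 : ε / 64 * Real.exp (L / 16) ≤ ε / 64 * y :=
      mul_le_mul_of_nonneg_left hc.le (by positivity)
    linarith

/-- The event of the theorem for one graph. -/
def GoodG {n : ℕ} (ε : ℝ) (r : ℕ) (v : Fin n) (G : SimpleGraph (Fin n)) : Prop :=
  ∀ i : ℕ, (1 : ℝ) / 2 * Real.log n / Real.log ((r : ℝ) - 1 - ε) < (i : ℝ) →
    (i : ℝ) < ((2 : ℝ) / 3 - ε) * Real.log n / Real.log ((r : ℝ) - 1) →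
    ((r : ℝ) - 1 - ε) * (Nat.card ↥(sphere G v i) : ℝ) ≤ (crossEdges G v i : ℝ)

lemma level_le (s : ℕ) (hs : 2 ≤ s) (L : ℝ) (hL : 1 ≤ L) (I : ℕ)
    (hI : (s : ℝ) ^ I ≤ Real.exp (2 * L / 3)) : (I : ℝ) ≤ L := by
  have hs' : (2 : ℝ) ≤ s := by exact_mod_cast hs
  have h1 : (2 : ℝ) ^ I ≤ Real.exp (2 * L / 3) := (pow_le_pow_left₀ (by norm_num) hs' I).trans hI
  have h2 := Real.log_le_log (by positivity) h1
  rw [Real.log_exp, Real.log_pow] at h2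
  have h3 := Real.log_two_gt_d9
  have h4 : (0 : ℝ) ≤ I := by positivity
  nlinarith

lemma single_bound {n : ℕ} (s : ℕ) (hs : 2 ≤ s) (v : Fin n) (L ε δ : ℝ) (hL : 1 ≤ L) (hε : 0 < ε)
    (hε1 : ε < 1) (hLn : L = Real.log n)
    (hn : (n : ℝ) = Real.exp L) (hrL : ((s : ℝ) + 1) ^ 2 ≤ 2 * L)
    (c1 : 80 * L * Real.exp (-(L / 8)) ≤ 1) (c2 : 80 * L * Real.exp (-(L / 12)) ≤ ε / 64)
    (c3 : 9 / 8 * L - 1 ≤ ε / 64 * Real.exp (L / 16))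
    (c4 : 16 * Real.exp (2 * L / 3) + 8 + 4 * L ≤ Real.exp L)
    (c5 : (L + 2) * Real.exp (1 - 9 / 8 * L) ≤ δ / 2 * Real.exp (-L)) :
    (((regs (Fin n) (s + 1)).filter (fun G => ¬ GoodG ε (s + 1) v G)).card : ℝ) ≤
      δ / 2 / n * (regs (Fin n) (s + 1)).card := by
  have hs' : (2 : ℝ) ≤ s := by exact_mod_cast hs
  set M := (range (⌊L⌋₊ + 1)).filter (fun I => (s : ℝ) ^ I ≤ Real.exp (2 * L / 3)) with hM
  have hsub : (regs (Fin n) (s + 1)).filter (fun G => ¬ GoodG ε (s + 1) v G) ⊆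
      M.biUnion (fun I => (regs (Fin n) (s + 1)).filter
        (fun G => thr L ε ((s : ℝ) ^ I) ≤ Phi (s + 1) v G (bb v G (I + 1)))) := by
    intro G hG
    rw [mem_filter] at hG
    by_contra hbad
    apply hG.2
    have hreg : IsRegularGraph G (s + 1) := (mem_filter.1 hG.1).2
    have hbad' : ∀ I : ℕ, (s : ℝ) ^ I ≤ Real.exp (2 * L / 3) →
        Phi (s + 1) v G (bb v G (I + 1)) < thr L ε ((s : ℝ) ^ I) := by
      intro I hI
      by_contra hlt
      apply hbad
      rw [mem_biUnion]
      refine ⟨I, ?_, mem_filter.2 ⟨hG.1, not_lt.1 hlt⟩⟩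
      rw [hM, mem_filter, mem_range]
      exact ⟨Nat.lt_succ_of_le (Nat.le_floor (level_le s hs L hL I hI)), hI⟩
    intro i hi1 hi2
    rw [← hLn] at hi1 hi2
    push_cast at hi1 hi2 ⊢
    rw [add_sub_cancel_right] at hi1 hi2 ⊢
    have hlog1 : 0 < Real.log ((s : ℝ) - ε) := Real.log_pos (by linarith)
    have hlog2 : Real.log ((s : ℝ) - ε) ≤ Real.log s := Real.log_le_log (by linarith) (by linarith)
    have hlog3 : 0 < Real.log (s : ℝ) := by linarith
    have hexp : (s : ℝ) ^ i = Real.exp (i * Real.log s) := by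
      rw [Real.exp_nat_mul, Real.exp_log (by linarith)]
    rw [div_lt_iff₀ hlog1] at hi1
    rw [lt_div_iff₀ hlog3] at hi2
    have hi0 : (0 : ℝ) ≤ i := by positivity
    have hmul := mul_le_mul_of_nonneg_left hlog2 hi0
    have hT : Real.exp (L / 16) < (s : ℝ) ^ i := by
      rw [hexp]; apply Real.exp_lt_exp.2; linarith
    have hU : (s : ℝ) ^ i ≤ Real.exp (2 * L / 3) := by
      rw [hexp]; apply Real.exp_le_exp.2; nlinarith
    have hipos : 1 ≤ i := by
      by_contra h0
      have : i = 0 := by omega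
      subst this
      simp at hi1
      linarith
    refine det_final v G s hs hreg (Real.exp (L / 16)) (ε / (8 * L)) ε (by positivity) i hipos ?_ ?_
      hT ?_
    · have := level_le s hs L hL i hU
      rw [div_mul_eq_mul_div, div_le_iff₀ (by positivity)]
      nlinarith
    · have : 8 * (ε / (8 * L)) = ε / L := by field_simp
      rw [this]
      exact div_le_self hε.le hL
    · intro j hj
      have hjU : (s : ℝ) ^ j ≤ Real.exp (2 * L / 3) :=
        (pow_le_pow_right₀ (by linarith) hj).trans hU
      have := hbad' j hjU
      unfold thr at this
      constructor
      · intro h; rwa [if_pos h] at this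
      · intro h; rwa [if_neg (not_le.2 h)] at this
  have h1 := (card_le_card hsub).trans card_biUnion_le
  have h2 : (((regs (Fin n) (s + 1)).filter (fun G => ¬ GoodG ε (s + 1) v G)).card : ℝ) ≤
      ∑ I ∈ M, (((regs (Fin n) (s + 1)).filter
        (fun G => thr L ε ((s : ℝ) ^ I) ≤ Phi (s + 1) v G (bb v G (I + 1)))).card : ℝ) := by
    exact_mod_cast h1
  have h3 : ∑ I ∈ M, (((regs (Fin n) (s + 1)).filter
        (fun G => thr L ε ((s : ℝ) ^ I) ≤ Phi (s + 1) v G (bb v G (I + 1)))).card : ℝ) ≤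
      M.card * (Real.exp (1 - 9 / 8 * L) * (regs (Fin n) (s + 1)).card) := by
    rw [← nsmul_eq_mul, ← Finset.sum_const]
    refine Finset.sum_le_sum fun I hI => ?_
    exact prob_level s hs v L ε hL hε (by simpa using hn) hrL c1 c2 c3 c4 I (mem_filter.1 hI).2
  have h4 : (M.card : ℝ) ≤ L + 2 := by
    have : M.card ≤ ⌊L⌋₊ + 1 := by
      refine (card_filter_le _ _).trans ?_
      rw [card_range]
    have h5 : (M.card : ℝ) ≤ (⌊L⌋₊ : ℝ) + 1 := by exact_mod_cast this
    have := Nat.floor_le (show (0 : ℝ) ≤ L by linarith)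
    linarith
  refine (h2.trans h3).trans ?_
  calc (M.card : ℝ) * (Real.exp (1 - 9 / 8 * L) * (regs (Fin n) (s + 1)).card)
      ≤ (L + 2) * (Real.exp (1 - 9 / 8 * L) * (regs (Fin n) (s + 1)).card) :=
        mul_le_mul_of_nonneg_right h4 (mul_nonneg (Real.exp_pos _).le (Nat.cast_nonneg _))
    _ = ((L + 2) * Real.exp (1 - 9 / 8 * L)) * (regs (Fin n) (s + 1)).card := by ring
    _ ≤ (δ / 2 * Real.exp (-L)) * (regs (Fin n) (s + 1)).card :=
        mul_le_mul_of_nonneg_right c5 (Nat.cast_nonneg _)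
    _ = _ := by rw [hn, Real.exp_neg, div_eq_mul_inv (δ / 2)]

lemma ev_small (c η : ℝ) (hc : 0 < c) (hη : 0 < η) :
    ∀ᶠ L : ℝ in Filter.atTop, L * Real.exp (-(c * L)) ≤ η := by
  have h := Real.tendsto_pow_mul_exp_neg_atTop_nhds_zero 1
  have h2 : Filter.Tendsto (fun L : ℝ => c * L) Filter.atTop Filter.atTop :=
    Filter.tendsto_id.const_mul_atTop hc
  have h3 := h.comp h2
  have h4 := h3.eventually (gt_mem_nhds (show (0 : ℝ) < c * η by positivity))
  filter_upwards [h4] with L hL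
  simp only [Function.comp, pow_one] at hL
  rw [mul_assoc] at hL
  exact (lt_of_mul_lt_mul_left hL hc.le).le

lemma ev_all (ε δ : ℝ) (hε : 0 < ε) (hδ : 0 < δ) :
    ∀ᶠ L : ℝ in Filter.atTop, 1 ≤ L ∧ 80 * L * Real.exp (-(L / 8)) ≤ 1 ∧
    80 * L * Real.exp (-(L / 12)) ≤ ε / 64 ∧ 9 / 8 * L - 1 ≤ ε / 64 * Real.exp (L / 16) ∧
    16 * Real.exp (2 * L / 3) + 8 + 4 * L ≤ Real.exp L ∧
    (L + 2) * Real.exp (1 - 9 / 8 * L) ≤ δ / 2 * Real.exp (-L) := by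
  filter_upwards [Filter.eventually_ge_atTop 1, ev_small (1 / 8) (1 / 80) (by norm_num) (by norm_num),
    ev_small (1 / 12) (ε / 64 / 80) (by norm_num) (by positivity),
    ev_small (1 / 16) (ε / 64 / 2) (by norm_num) (by positivity),
    ev_small (1 / 3) (1 / 32) (by norm_num) (by norm_num),
    ev_small 1 (1 / 24) (by norm_num) (by norm_num),
    ev_small (1 / 8) (δ / 2 / (3 * Real.exp 1)) (by norm_num) (by positivity)]
    with L h1 a1 a2 a3 a4 a5 a6
  have e1 : 1 / 8 * L = L / 8 := by ring
  have e2 : 1 / 12 * L = L / 12 := by ring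
  have e3 : 1 / 16 * L = L / 16 := by ring
  have e4 : 1 / 3 * L = L / 3 := by ring
  rw [e1] at a1 a6
  rw [e2] at a2
  rw [e3] at a3
  rw [e4] at a4
  rw [one_mul] at a5
  refine ⟨h1, by linarith, by linarith, ?_, ?_, ?_⟩
  · have h := mul_le_mul_of_nonneg_right a3 (Real.exp_pos (L / 16)).le
    rw [mul_assoc, ← Real.exp_add, neg_add_cancel, Real.exp_zero, mul_one] at h
    have := Real.exp_pos (L / 16)
    nlinarith
  · have h := mul_le_mul_of_nonneg_right a4 (Real.exp_pos L).le
    have hh : Real.exp (-(L / 3)) * Real.exp L = Real.exp (2 * L / 3) := by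
      rw [← Real.exp_add]; congr 1; ring
    rw [mul_assoc, hh] at h
    have h2 := mul_le_mul_of_nonneg_right a5 (Real.exp_pos L).le
    rw [mul_assoc, ← Real.exp_add, neg_add_cancel, Real.exp_zero, mul_one] at h2
    have h3 := Real.exp_pos (2 * L / 3)
    nlinarith
  · have hh : Real.exp (1 - 9 / 8 * L) = Real.exp 1 * Real.exp (-(L / 8)) * Real.exp (-L) := by
      rw [← Real.exp_add, ← Real.exp_add]; congr 1; ring
    rw [hh, ← mul_assoc]
    apply mul_le_mul_of_nonneg_right _ (Real.exp_pos _).le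
    rw [le_div_iff₀ (by positivity)] at a6
    refine le_trans ?_ a6
    have : 0 < Real.exp 1 * Real.exp (-(L / 8)) := by positivity
    nlinarith

lemma pair_bound {n : ℕ} (ε δ : ℝ) (r : ℕ) (v₁ v₂ : Fin n)
    (h : ∀ v : Fin n, (((regs (Fin n) r).filter (fun G => ¬ GoodG ε r v G)).card : ℝ) ≤
      δ / 2 / n * (regs (Fin n) r).card) :
    (1 - δ / n) * ((regs (Fin n) r).card : ℝ) ^ 2 ≤
      (((regs (Fin n) r).filter (fun G => GoodG ε r v₁ G)).card : ℝ) *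
      (((regs (Fin n) r).filter (fun G => GoodG ε r v₂ G)).card : ℝ) := by
  have hs : ∀ v : Fin n, (((regs (Fin n) r).filter (fun G => GoodG ε r v G)).card : ℝ) +
      (((regs (Fin n) r).filter (fun G => ¬ GoodG ε r v G)).card : ℝ) = (regs (Fin n) r).card := by
    intro v
    exact_mod_cast card_filter_add_card_filter_not (s := regs (Fin n) r) (fun G => GoodG ε r v G)
  have b1 := h v₁
  have b2 := h v₂
  have s1 := hs v₁
  have s2 := hs v₂
  set R : ℝ := ((regs (Fin n) r).card : ℝ)
  set x₁ : ℝ := (((regs (Fin n) r).filter (fun G => ¬ GoodG ε r v₁ G)).card : ℝ)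
  set x₂ : ℝ := (((regs (Fin n) r).filter (fun G => ¬ GoodG ε r v₂ G)).card : ℝ)
  have x1 : 0 ≤ x₁ := Nat.cast_nonneg _
  have x2 : 0 ≤ x₂ := Nat.cast_nonneg _
  have hR : 0 ≤ R := Nat.cast_nonneg _
  rw [← eq_sub_iff_add_eq] at s1 s2
  rw [s1, s2]
  have e : δ / n = δ / 2 / n + δ / 2 / n := by ring
  rw [e]
  have := mul_le_mul_of_nonneg_right b1 hR
  have := mul_le_mul_of_nonneg_right b2 hR
  nlinarith [mul_nonneg x1 x2]

lemma card_pairs {α : Type} [Fintype α] (A B : Finset α) (P : α × α → Prop)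
    (h : ∀ a ∈ A, ∀ b ∈ B, P (a, b)) : A.card * B.card ≤ Nat.card {p : α × α // P p} := by
  rw [← card_product, Nat.card_eq_fintype_card, Fintype.card_subtype]
  apply card_le_card
  rintro ⟨a, b⟩ hab
  rw [mem_product] at hab
  simp only [mem_filter, mem_univ, true_and]
  exact h a hab.1 b hab.2

lemma card_regs (V : Type) [Fintype V] (r : ℕ) :
    Nat.card {G : SimpleGraph V // IsRegularGraph G r} = (regs V r).card := by
  refine Nat.subtype_card _ fun G => ?_
  simp [regs]

lemma mem_regs_iff (r : ℕ) (G : SimpleGraph V) : G ∈ regs V r ↔ IsRegularGraph G r := by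
  simp [regs]

end Helpers

/-- Lemma A.1, second part.  Fix `0 < ε < 1`.  For every `δ > 0` there is `N`
such that for all `n ≥ N`, all `3 ≤ r < (2 log n)^{1/2}` with `rn` even, and any fixed vertices
`v₁, v₂`: if `G₁, G₂` are drawn independently uniformly from the `r`-regular simple graphs on
`{1,…,n}`, then with probability at least `1 - δ/n`, for every integer `i` with
`(1/2) log n / log(r-1-ε) < i < (2/3 - ε) log n / log(r-1)` and each `j ∈ {1,2}`, the number
of edges between `Q_{v_j,G_j}^i` and `Q_{v_j,G_j}^{i+1}` is at least
`(r - 1 - ε)·|Q_{v_j,G_j}^i|`. -/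
theorem boundary_edges_abundant_whp (ε : ℝ) (hε0 : 0 < ε) (hε1 : ε < 1) :
    ∀ δ : ℝ, 0 < δ → ∃ N : ℕ, ∀ n : ℕ, N ≤ n → ∀ r : ℕ, 3 ≤ r →
      (r : ℝ) < Real.sqrt (2 * Real.log n) → Even (r * n) → ∀ v₁ v₂ : Fin n,
      (1 - δ / n) * (Nat.card {G : SimpleGraph (Fin n) // IsRegularGraph G r} : ℝ) ^ 2 ≤
        (Nat.card {p : SimpleGraph (Fin n) × SimpleGraph (Fin n) //
          IsRegularGraph p.1 r ∧ IsRegularGraph p.2 r ∧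
          ∀ i : ℕ, (1 : ℝ) / 2 * Real.log n / Real.log ((r : ℝ) - 1 - ε) < (i : ℝ) →
            (i : ℝ) < ((2 : ℝ) / 3 - ε) * Real.log n / Real.log ((r : ℝ) - 1) →
            (((r : ℝ) - 1 - ε) * (Nat.card ↥(sphere p.1 v₁ i) : ℝ) ≤
                (crossEdges p.1 v₁ i : ℝ)) ∧
            (((r : ℝ) - 1 - ε) * (Nat.card ↥(sphere p.2 v₂ i) : ℝ) ≤
                (crossEdges p.2 v₂ i : ℝ))} : ℝ) := by
  classical
  intro δ hδ
  have hlog : Filter.Tendsto (fun n : ℕ => Real.log (n : ℝ)) Filter.atTop Filter.atTop :=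
    Real.tendsto_log_atTop.comp tendsto_natCast_atTop_atTop
  obtain ⟨N, hN⟩ := Filter.eventually_atTop.1 (hlog.eventually (ev_all ε δ hε0 hδ))
  refine ⟨N, fun n hn r hr hrn _ v₁ v₂ => ?_⟩
  obtain ⟨hL, c1, c2, c3, c4, c5⟩ := hN n hn
  have hn0 : (0 : ℝ) < n := by
    rcases Nat.eq_zero_or_pos n with h | h
    · subst h; simp at hL; linarith
    · exact_mod_cast h
  obtain ⟨s, rfl⟩ : ∃ s, r = s + 1 := ⟨r - 1, by omega⟩
  have hrL : ((s : ℝ) + 1) ^ 2 ≤ 2 * Real.log n := by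
    have h1 := Real.sq_sqrt (show (0 : ℝ) ≤ 2 * Real.log n by linarith)
    rw [← h1]
    push_cast at hrn
    exact pow_le_pow_left₀ (by positivity) hrn.le 2
  have hb := fun v : Fin n => single_bound s (by omega) v (Real.log n) ε δ hL hε0 hε1 rfl
    (Real.exp_log hn0).symm hrL c1 c2 c3 c4 c5
  have hp := pair_bound ε δ (s + 1) v₁ v₂ hb
  rw [card_regs]
  refine hp.trans ?_
  rw [← Nat.cast_mul]
  apply Nat.cast_le.2
  refine card_pairs _ _ _ fun G hG H hH => ?_
  rw [Finset.mem_filter, mem_regs_iff] at hG hH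
  exact ⟨hG.1, hH.1, fun i h1 h2 => ⟨hG.2 i h1 h2, hH.2 i h1 h2⟩⟩
end

section
/- Let G be a finite r-regular simple graph with r ≥ 2, let v be a vertex of G, let K ≥ 1, and let 0 ≤ ε. Suppose the number of edges of G with one endpoint in Q_{v,G}^K and the other endpoint in Q_{v,G}^{K+1} is at least (r − 1 − ε)·|Q_{v,G}^K|. Then at least (1 − ε)·|Q_{v,G}^K| vertices of Q_{v,G}^K have degree exactly 1 in the induced subgraph B_G(v,K). -/
lemma exists_inner_neighbor {V : Type} (G : SimpleGraph V) (v u : V) (K : ℕ) (hK : 1 ≤ K)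
    (hu : u ∈ sphere G v K) : ∃ w, w ∈ ball G v K ∧ G.Adj u w := by
  obtain ⟨hr, hd⟩ := hu
  obtain ⟨p, hp⟩ := hr.symm.exists_walk_length_eq_dist
  rw [SimpleGraph.dist_comm, hd] at hp
  cases p with
  | nil => simp at hp; omega
  | cons h q =>
    rename_i w
    refine ⟨w, ⟨q.reachable.symm, ?_⟩, h⟩
    rw [SimpleGraph.dist_comm]
    have := SimpleGraph.dist_le q
    simp at hp
    omega

lemma local_count {V : Type} [Finite V] (G : SimpleGraph V) (r : ℕ)
    (hreg : IsRegularGraph G r) (v u : V) (K : ℕ) :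
    Nat.card {w : V // w ∈ sphere G v (K + 1) ∧ G.Adj u w} +
      Nat.card {w : V // w ∈ ball G v K ∧ G.Adj u w} ≤ r := by
  classical
  haveI := Fintype.ofFinite V
  rw [← hreg u]
  simp only [Nat.card_eq_fintype_card, Fintype.card_subtype]
  rw [← Finset.card_union_of_disjoint]
  · apply Finset.card_le_card
    intro w
    simp only [Finset.mem_union, Finset.mem_filter, Finset.mem_univ, true_and]
    tauto
  · rw [Finset.disjoint_left]
    intro w
    simp only [Finset.mem_filter, Finset.mem_univ, true_and, sphere, ball, Set.mem_setOf_eq]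
    rintro ⟨⟨_, h⟩, _⟩ ⟨⟨_, h'⟩, _⟩
    omega

lemma cross_sum {V : Type} [Fintype V] [DecidableEq V] (G : SimpleGraph V) (v : V) (K : ℕ)
    [DecidablePred (· ∈ sphere G v K)] :
    crossEdges G v K = ∑ u ∈ Finset.univ.filter (· ∈ sphere G v K),
      Nat.card {w : V // w ∈ sphere G v (K + 1) ∧ G.Adj u w} := by
  classical
  unfold crossEdges
  simp only [Nat.card_eq_fintype_card, Fintype.card_subtype]
  rw [← Finset.card_sigma]
  refine Finset.card_bij' (fun p _ => ⟨p.1, p.2⟩) (fun p _ => (p.1, p.2)) ?_ ?_ ?_ ?_ <;> simp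

/-- Let `G` be finite `r`-regular with `r ≥ 2`, `K ≥ 1`, `ε ≥ 0`.  If the
number of edges between `Q_{v,G}^K` and `Q_{v,G}^{K+1}` is at least `(r-1-ε)·|Q_{v,G}^K|`,
then at least `(1-ε)·|Q_{v,G}^K|` vertices of `Q_{v,G}^K` have degree exactly `1` in the
induced subgraph `B_G(v,K)`. -/
theorem boundary_vertices_degree_one {V : Type} [Finite V] (G : SimpleGraph V) (r : ℕ)
    (hr : 2 ≤ r) (hreg : IsRegularGraph G r) (v : V) (K : ℕ) (hK : 1 ≤ K) (ε : ℝ)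
    (hε : 0 ≤ ε)
    (hcross : ((r : ℝ) - 1 - ε) * (Nat.card ↥(sphere G v K) : ℝ) ≤ (crossEdges G v K : ℝ)) :
    (1 - ε) * (Nat.card ↥(sphere G v K) : ℝ) ≤
      (Nat.card {u : V // u ∈ sphere G v K ∧
        Nat.card {w : V // w ∈ ball G v K ∧ G.Adj u w} = 1} : ℝ) := by
  classical
  haveI := Fintype.ofFinite V
  have key : crossEdges G v K + 2 * Nat.card ↥(sphere G v K) ≤ r * Nat.card ↥(sphere G v K) +
      Nat.card {u : V // u ∈ sphere G v K ∧
        Nat.card {w : V // w ∈ ball G v K ∧ G.Adj u w} = 1} := by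
    have hc : Nat.card ↥(sphere G v K) = (Finset.univ.filter (· ∈ sphere G v K)).card := by
      rw [Nat.card_eq_fintype_card, Fintype.card_subtype]
    have hd : Nat.card {u : V // u ∈ sphere G v K ∧
        Nat.card {w : V // w ∈ ball G v K ∧ G.Adj u w} = 1} =
        ∑ u ∈ Finset.univ.filter (· ∈ sphere G v K),
          if Nat.card {w : V // w ∈ ball G v K ∧ G.Adj u w} = 1 then 1 else 0 := by
      rw [Nat.card_eq_fintype_card, Fintype.card_subtype, ← Finset.card_filter,
        Finset.filter_filter]
    rw [hd, hc, cross_sum, mul_comm 2, mul_comm r, ← smul_eq_mul, ← smul_eq_mul,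
      ← Finset.sum_const, ← Finset.sum_const, ← Finset.sum_add_distrib, ← Finset.sum_add_distrib]
    apply Finset.sum_le_sum
    intro u hu
    have hu' : u ∈ sphere G v K := by simpa using hu
    have h1 := local_count G r hreg v u K
    obtain ⟨w, hw⟩ := exists_inner_neighbor G v u K hK hu'
    have h2 : 0 < Nat.card {w : V // w ∈ ball G v K ∧ G.Adj u w} :=
      Nat.card_pos_iff.mpr ⟨⟨⟨w, hw⟩⟩, inferInstance⟩
    split_ifs <;> omega
  have key' : (crossEdges G v K : ℝ) + 2 * (Nat.card ↥(sphere G v K) : ℝ) ≤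
      r * (Nat.card ↥(sphere G v K) : ℝ) + (Nat.card {u : V // u ∈ sphere G v K ∧
        Nat.card {w : V // w ∈ ball G v K ∧ G.Adj u w} = 1} : ℝ) := by
    exact_mod_cast key
  linarith
end

section
/- Let G₁, G₂ be finite simple graphs with vertices v₁ and v₂ respectively, and let h ∈ ℕ. If there is a graph isomorphism from the induced subgraph B_{G₁}(v₁,h) to the induced subgraph B_{G₂}(v₂,h) mapping v₁ to v₂, then for every t ≤ h the t-round WL colors of v₁ in G₁ and of v₂ in G₂ are equal: c_t^{G₁}(v₁) = c_t^{G₂}(v₂). That is, the t-round WL color of a vertex depends only on the rooted isomorphism type of its height-h rooted subgraph, for all t ≤ h. -/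
lemma ball_of_adj {V : Type} (G : SimpleGraph V) (v a u : V) (h t : ℕ)
    (ha : a ∈ ball G v h) (hd : G.dist v a + (t + 1) ≤ h) (hau : G.Adj a u) :
    u ∈ ball G v h ∧ G.dist v u + t ≤ h := by
  have hr : G.Reachable v u := ha.1.trans hau.reachable
  have h1 : G.dist v u ≤ G.dist v a + 1 := by
    obtain ⟨p, hp⟩ := ha.1.exists_walk_length_eq_dist
    have := SimpleGraph.dist_le (p.concat hau)
    rw [SimpleGraph.Walk.length_concat, hp] at this
    exact this
  exact ⟨⟨hr, by omega⟩, by omega⟩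

lemma wlColor_eq_of_ball_iso_aux {V₁ V₂ : Type} [Finite V₁] [Finite V₂]
    (G₁ : SimpleGraph V₁) (G₂ : SimpleGraph V₂) (v₁ : V₁) (v₂ : V₂) (h : ℕ)
    (f : G₁.induce (ball G₁ v₁ h) ≃g G₂.induce (ball G₂ v₂ h)) :
    ∀ (t : ℕ) (a : ball G₁ v₁ h), G₁.dist v₁ a + t ≤ h → G₂.dist v₂ (f a) + t ≤ h →
      wlColor G₁ t a = wlColor G₂ t (f a) := by
  intro t
  induction t with
  | zero => intro a _ _; rfl
  | succ t ih =>
    intro a h1 h2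
    have key : ((Set.toFinite {u | G₁.Adj a u}).toFinset.val).map (wlColor G₁ t) =
        ((Set.toFinite {u | G₂.Adj (f a) u}).toFinset.val).map (wlColor G₂ t) := by
      have nb : ∀ u, u ∈ (Set.toFinite {u | G₁.Adj a u}).toFinset.val → G₁.Adj a u := by
        intro u hu
        simpa using hu
      have adj : ∀ (u : V₁) (hu : G₁.Adj a u) (hb : u ∈ ball G₁ v₁ h),
          G₂.Adj (f a) (f ⟨u, hb⟩) := by
        intro u hu hb
        have : (G₁.induce (ball G₁ v₁ h)).Adj a ⟨u, hb⟩ := hu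
        exact f.map_rel_iff.2 this
      refine Multiset.map_eq_map_of_bij_of_nodup _ _ (Finset.nodup _) (Finset.nodup _)
        (fun u hu => (f ⟨u, (ball_of_adj G₁ v₁ a u h t a.2 h1 (nb u hu)).1⟩ : V₂)) ?_ ?_ ?_ ?_
      · intro u hu
        simpa using adj u (nb u hu) _
      · intro u hu w hw huw
        have := f.injective (Subtype.ext huw)
        exact congrArg Subtype.val this
      · intro w hw
        have hw' : G₂.Adj (f a) w := by simpa using hw
        have hb := (ball_of_adj G₂ v₂ (f a) w h t (f a).2 h2 hw').1
        have hadj : (G₁.induce (ball G₁ v₁ h)).Adj a (f.symm ⟨w, hb⟩) := by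
          rw [← f.map_rel_iff]
          rw [RelIso.apply_symm_apply]
          exact hw'
        have hadj' : G₁.Adj a (f.symm ⟨w, hb⟩) := hadj
        refine ⟨f.symm ⟨w, hb⟩, by simpa using hadj', ?_⟩
        simp
      · intro u hu
        have hb := ball_of_adj G₁ v₁ a u h t a.2 h1 (nb u hu)
        exact ih ⟨u, hb.1⟩ hb.2
          (ball_of_adj G₂ v₂ (f a) _ h t (f a).2 h2 (adj u (nb u hu) hb.1)).2
    exact Prod.ext (ih a (by omega) (by omega)) key

/-- If there is a graph isomorphism from `B_{G₁}(v₁,h)` to `B_{G₂}(v₂,h)`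
mapping `v₁` to `v₂`, then `c_t^{G₁}(v₁) = c_t^{G₂}(v₂)` for every `t ≤ h`: the `t`-round WL
color of a vertex depends only on the rooted isomorphism type of its height-`h` rooted
subgraph, for all `t ≤ h`. -/
theorem wlColor_eq_of_ball_iso {V₁ V₂ : Type} [Finite V₁] [Finite V₂]
    (G₁ : SimpleGraph V₁) (G₂ : SimpleGraph V₂) (v₁ : V₁) (v₂ : V₂) (h : ℕ)
    (f : G₁.induce (ball G₁ v₁ h) ≃g G₂.induce (ball G₂ v₂ h))
    (hf : (f ⟨v₁, self_mem_ball G₁ v₁ h⟩ : V₂) = v₂) :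
    ∀ t : ℕ, t ≤ h → wlColor G₁ t v₁ = wlColor G₂ t v₂ := by
  intro t ht
  have := wlColor_eq_of_ball_iso_aux G₁ G₂ v₁ v₂ h f t ⟨v₁, self_mem_ball G₁ v₁ h⟩
    (by simpa using ht) (by rw [hf]; simpa using ht)
  rwa [hf] at this
end

section
/- Let G be a finite simple graph, v a vertex of G, and h ∈ ℕ. Then for every t ≤ h, the t-round WL color of v computed in G equals the t-round WL color of v computed within the induced subgraph B_G(v,h): c_t^G(v) = c_t^{B_G(v,h)}(v). -/
lemma wlColor_eq_aux {V : Type} [Finite V] (G : SimpleGraph V) (v : V) (h : ℕ) :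
    ∀ (t : ℕ) (u : V) (hu : u ∈ ball G v h), G.dist v u + t ≤ h →
      wlColor G t u = wlColor (G.induce (ball G v h)) t ⟨u, hu⟩ := by
  intro t
  induction t with
  | zero => intro u hu _; rfl
  | succ t ih =>
    intro u hu hd
    have key : ∀ w, G.Adj u w → w ∈ ball G v h ∧ G.dist v w + t ≤ h := by
      intro w hw
      have h1 : G.dist v w ≤ G.dist v u + 1 := by
        obtain ⟨p, hp⟩ := hu.1.exists_walk_length_eq_dist
        have h2 := SimpleGraph.dist_le (p.concat hw)
        rw [SimpleGraph.Walk.length_concat] at h2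
        omega
      exact ⟨⟨hu.1.trans hw.reachable, by omega⟩, by omega⟩
    have hset : (Set.toFinite {w | G.Adj u w}).toFinset =
        (Set.toFinite {w | (G.induce (ball G v h)).Adj ⟨u, hu⟩ w}).toFinset.map
          (Function.Embedding.subtype _) := by
      ext w
      simp only [Set.Finite.mem_toFinset, Set.mem_setOf_eq, Finset.mem_map,
        Function.Embedding.subtype_apply, SimpleGraph.comap_adj]
      constructor
      · intro hw
        exact ⟨⟨w, (key w hw).1⟩, hw, rfl⟩
      · rintro ⟨x, hx, rfl⟩
        exact hx
    refine Prod.ext (ih u hu (by omega)) ?_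
    show Multiset.map _ _ = Multiset.map _ _
    rw [hset, Finset.map_val, Multiset.map_map]
    refine Multiset.map_congr rfl ?_
    intro x hx
    have hx' : G.Adj u x := by
      simpa using hx
    exact ih x x.2 (key x hx').2

/-- For every `t ≤ h`, the `t`-round WL color of `v` computed in `G` equals
the `t`-round WL color of `v` computed within the induced subgraph `B_G(v,h)`. -/
theorem wlColor_eq_wlColor_ball {V : Type} [Finite V] (G : SimpleGraph V) (v : V) (h : ℕ) :
    ∀ t : ℕ, t ≤ h →
      wlColor G t v = wlColor (G.induce (ball G v h)) t ⟨v, self_mem_ball G v h⟩ := by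
  intro t ht
  exact wlColor_eq_aux G v h t v _ (by rw [SimpleGraph.dist_self]; omega)
end

section
/- Let G₁ be the 6-vertex simple graph that is the disjoint union of two 3-cycles (two triangles), and let G₂ be the 6-cycle (hexagon). Then: (a) G₁ and G₂ are not isomorphic; (b) for every t ∈ ℕ, the multiset of t-round WL colors of G₁ equals the multiset of t-round WL colors of G₂ (indeed all twelve vertices share one common t-round color); but (c) the (1,1) subgraph-WL graph representations of G₁ and G₂ are different. In particular, the height-1 rooted subgraph of every vertex of G₁ has 3 vertices and 3 edges (a closed triangle), while the height-1 rooted subgraph of every vertex of G₂ has 3 vertices and 2 edges (an open triangle). -/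
/-- The 6-vertex graph consisting of two disjoint triangles: vertices `0,1,2` form one
triangle and `3,4,5` the other. -/
def twoTriangles : SimpleGraph (Fin 6) :=
  SimpleGraph.fromRel (fun u v => (u.val < 3 ↔ v.val < 3))

/-- The 6-cycle (hexagon). -/
def hexagon : SimpleGraph (Fin 6) :=
  SimpleGraph.fromRel (fun u v => v = u + 1)

instance decAdjTwoTriangles : DecidableRel twoTriangles.Adj := fun a b =>
  decidable_of_iff (a ≠ b ∧ ((a.val < 3 ↔ b.val < 3) ∨ (b.val < 3 ↔ a.val < 3)))
    (by simp [twoTriangles, SimpleGraph.fromRel_adj])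

instance decAdjHexagon : DecidableRel hexagon.Adj := fun a b =>
  decidable_of_iff (a ≠ b ∧ (b = a + 1 ∨ a = b + 1))
    (by simp [hexagon, SimpleGraph.fromRel_adj])

/-- The closed neighbourhood of a vertex. -/
abbrev closedNbhd {V : Type} (G : SimpleGraph V) (v : V) : Set V := {u | u = v ∨ G.Adj v u}

lemma ball_one {V : Type} (G : SimpleGraph V) (v : V) : ball G v 1 = closedNbhd G v := by
  ext u
  simp only [ball, closedNbhd, Set.mem_ofPred_eq]
  constructor
  · rintro ⟨hr, hd⟩
    rcases Nat.le_one_iff_eq_zero_or_eq_one.mp hd with h | h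
    · left
      exact (hr.dist_eq_zero_iff.mp h).symm
    · right
      exact SimpleGraph.dist_eq_one_iff_adj.mp h
  · rintro (rfl | h)
    · simp
    · exact ⟨h.reachable, (SimpleGraph.dist_eq_one_iff_adj.mpr h).le⟩

lemma wlColor_const {V : Type} [Fintype V] (G : SimpleGraph V) [DecidableRel G.Adj]
    (hG : ∀ v, (Finset.univ.filter (fun u => G.Adj v u)).card = 2) (t : ℕ) (c : WLColor t)
    (hc : ∀ v, wlColor G t v = c) (v : V) :
    wlColor G (t + 1) v = (c, Multiset.replicate 2 c) := by
  have e : (Set.toFinite {u | G.Adj v u}).toFinset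
      = Finset.univ.filter (fun u => G.Adj v u) := by ext; simp
  have : wlColor G t = fun _ => c := funext hc
  rw [wlColor, this, e, Multiset.map_const']
  change (c, Multiset.replicate (Finset.card _) c) = _
  rw [hG]

lemma color_const (t : ℕ) : ∃ c : WLColor t, (∀ v : Fin 6, wlColor twoTriangles t v = c) ∧
        (∀ v : Fin 6, wlColor hexagon t v = c) := by
  induction t with
  | zero => exact ⟨(), fun _ => rfl, fun _ => rfl⟩
  | succ t ih =>
    obtain ⟨c, h1, h2⟩ := ih
    exact ⟨(c, Multiset.replicate 2 c), wlColor_const _ (by decide) t c h1,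
      wlColor_const _ (by decide) t c h2⟩

/-- Number of neighbours recorded in a one-round color. -/
def colorDeg (c : WLColor 1) : ℕ := Multiset.card c.2

lemma colorDeg_wlColor {V : Type} [Fintype V] (G : SimpleGraph V) [DecidableRel G.Adj] (v : V) :
    colorDeg (wlColor G 1 v) = (Finset.univ.filter (fun u => G.Adj v u)).card := by
  have e : (Set.toFinite {u | G.Adj v u}).toFinset
      = Finset.univ.filter (fun u => G.Adj v u) := by ext; simp
  rw [← e]
  exact Multiset.card_map _ _

lemma mem_graphColorMultiset {V : Type} [Finite V] (G : SimpleGraph V) (t : ℕ) (c : WLColor t) :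
    c ∈ graphColorMultiset G t ↔ ∃ v, wlColor G t v = c := by
  simp [graphColorMultiset]

lemma tri_deg : ∀ v : Fin 6, ∀ u : closedNbhd twoTriangles v,
    (Finset.univ.filter (fun w => (twoTriangles.induce (closedNbhd twoTriangles v)).Adj u w)).card
      = 2 := by decide

lemma hex_deg : ∀ v : Fin 6, ∃ u : closedNbhd hexagon v,
    (Finset.univ.filter (fun w => (hexagon.induce (closedNbhd hexagon v)).Adj u w)).card
      = 1 := by decide

lemma nodeRep_one (G : SimpleGraph (Fin 6)) (v : Fin 6) :
    subgraphWLNodeRep G 1 1 v = graphColorMultiset (G.induce (closedNbhd G v)) 1 := by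
  have key : ∀ s s' : Set (Fin 6), s = s' →
      graphColorMultiset (G.induce s) 1 = graphColorMultiset (G.induce s') 1 := by
    rintro s _ rfl
    rfl
  exact key _ _ (ball_one G v)

lemma rep_ne : subgraphWLGraphRep twoTriangles 1 1 ≠ subgraphWLGraphRep hexagon 1 1 := by
  intro h
  have h0 : subgraphWLNodeRep twoTriangles 1 1 0 ∈ subgraphWLGraphRep twoTriangles 1 1 := by
    simp only [subgraphWLGraphRep]
    exact Multiset.mem_map_of_mem _ (@Finset.mem_univ _ (Fintype.ofFinite _) _)
  rw [h] at h0
  simp only [subgraphWLGraphRep, Multiset.mem_map] at h0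
  obtain ⟨v, -, hv⟩ := h0
  rw [nodeRep_one, nodeRep_one] at hv
  obtain ⟨u, hu⟩ := hex_deg v
  have hm := (mem_graphColorMultiset (hexagon.induce (closedNbhd hexagon v)) 1 _).mpr ⟨u, rfl⟩
  rw [hv, mem_graphColorMultiset] at hm
  obtain ⟨x, hx⟩ := hm
  have := congrArg colorDeg hx
  rw [colorDeg_wlColor, colorDeg_wlColor, hu, tri_deg] at this
  omega

lemma tri_count : ∀ v : Fin 6, Fintype.card (closedNbhd twoTriangles v) = 3 ∧
    Fintype.card (twoTriangles.induce (closedNbhd twoTriangles v)).edgeSet = 3 := by decide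

lemma hex_count : ∀ v : Fin 6, Fintype.card (closedNbhd hexagon v) = 3 ∧
    Fintype.card (hexagon.induce (closedNbhd hexagon v)).edgeSet = 2 := by decide

/-- Two triangles vs. the hexagon: (a) they are non-isomorphic; (b) for
every `t` all twelve vertices share one common `t`-round WL color, so the multisets of WL
colors agree; (c) their `(1,1)` subgraph-WL graph representations differ.  In particular,
every height-1 rooted subgraph of `twoTriangles` has 3 vertices and 3 edges (a closed
triangle), while every height-1 rooted subgraph of `hexagon` has 3 vertices and 2 edges (an
open triangle). -/
theorem twoTriangles_vs_hexagon :
    (¬ Nonempty (twoTriangles ≃g hexagon)) ∧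
    (∀ t : ℕ, (∃ c : WLColor t, (∀ v : Fin 6, wlColor twoTriangles t v = c) ∧
        (∀ v : Fin 6, wlColor hexagon t v = c)) ∧
      graphColorMultiset twoTriangles t = graphColorMultiset hexagon t) ∧
    subgraphWLGraphRep twoTriangles 1 1 ≠ subgraphWLGraphRep hexagon 1 1 ∧
    (∀ v : Fin 6, Nat.card ↥(ball twoTriangles v 1) = 3 ∧
        Nat.card ↥(twoTriangles.induce (ball twoTriangles v 1)).edgeSet = 3) ∧
    (∀ v : Fin 6, Nat.card ↥(ball hexagon v 1) = 3 ∧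
        Nat.card ↥(hexagon.induce (ball hexagon v 1)).edgeSet = 2) := by
  refine ⟨?_, fun t => ⟨color_const t, ?_⟩, rep_ne, fun v => ?_, fun v => ?_⟩
  · rintro ⟨f⟩
    have key : ∀ a b c : Fin 6, hexagon.Adj a b → hexagon.Adj b c → ¬ hexagon.Adj a c := by decide
    exact key (f 0) (f 1) (f 2) (f.map_adj_iff.mpr (by decide)) (f.map_adj_iff.mpr (by decide))
      (f.map_adj_iff.mpr (by decide))
  · obtain ⟨c, h1, h2⟩ := color_const t
    simp only [graphColorMultiset]
    rw [funext h1, funext h2]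
  · rw [ball_one, Nat.card_eq_fintype_card, Nat.card_eq_fintype_card]
    exact tri_count v
  · rw [ball_one, Nat.card_eq_fintype_card, Nat.card_eq_fintype_card]
    exact hex_count v
end

section
/- Let G₁ and G₂ be finite simple graphs and h ∈ ℕ. If the multiset of h-round WL colors of the vertices of G₁ (computed in G₁) differs from the multiset of h-round WL colors of the vertices of G₂ (computed in G₂), then the multiset {{c_h^{B_{G₁}(v,h)}(v) : v a vertex of G₁}} differs from the multiset {{c_h^{B_{G₂}(v,h)}(v) : v a vertex of G₂}}, where each color c_h^{B_G(v,h)}(v) is the h-round WL color of the root v computed within its own height-h rooted subgraph. (Hence any pair of graphs discriminated by 1-WL is also discriminated by NGNN with center pooling, so NGNN is at least as powerful as 1-WL.) -/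
/-- The multiset of root colors: for each vertex `v` of `G`, the `h`-round WL color of `v`
computed within its own height-`h` rooted subgraph `B_G(v,h)`. -/
noncomputable def centerPoolRep {V : Type} [Finite V] (G : SimpleGraph V) (h : ℕ) :
    Multiset (WLColor h) :=
  haveI := Fintype.ofFinite V
  Finset.univ.val.map (fun v => wlColor (G.induce (ball G v h)) h ⟨v, self_mem_ball G v h⟩)

lemma mem_ball_adj {V : Type} (G : SimpleGraph V) {v u w : V} {d : ℕ}
    (hu : u ∈ ball G v d) (h : G.Adj u w) : w ∈ ball G v (d + 1) := by
  obtain ⟨hr, hd⟩ := hu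
  obtain ⟨p, hp⟩ := hr.exists_walk_length_eq_dist
  refine ⟨hr.trans h.reachable, ?_⟩
  have := SimpleGraph.dist_le (p.concat h)
  rw [SimpleGraph.Walk.length_concat] at this
  omega

lemma wlColor_ball {V : Type} [Finite V] (G : SimpleGraph V) (v : V) (h : ℕ) (t : ℕ) :
    ∀ (d : ℕ) (u : V) (hu : u ∈ ball G v h), d + t ≤ h → u ∈ ball G v d →
      wlColor (G.induce (ball G v h)) t ⟨u, hu⟩ = wlColor G t u := by
  induction t with
  | zero => intros; rfl
  | succ t ih =>
    intro d u hu hdt hd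
    simp only [wlColor]
    refine Prod.ext (ih d u hu (by omega) hd) ?_
    have hs : (Set.toFinite {w | G.Adj u w}).toFinset =
        ((Set.toFinite {w | (G.induce (ball G v h)).Adj ⟨u, hu⟩ w}).toFinset).map
          (Function.Embedding.subtype _) := by
      ext w
      simp only [Set.Finite.mem_toFinset, Set.mem_setOf_eq, Finset.mem_map,
        SimpleGraph.comap_adj, Function.Embedding.subtype_apply, SimpleGraph.induce]
      constructor
      · intro hw
        have h1 := mem_ball_adj G hd hw
        exact ⟨⟨w, h1.1, h1.2.trans (by omega)⟩, hw, rfl⟩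
      · rintro ⟨x, hx, rfl⟩
        exact hx
    show Multiset.map _ _ = Multiset.map _ _
    rw [hs, Finset.map_val, Multiset.map_map]
    refine Multiset.map_congr rfl ?_
    intro x hx
    have hx' : G.Adj u x := by simpa using hx
    exact ih (d + 1) x.1 x.2 (by omega) (mem_ball_adj G hd hx')

lemma centerPoolRep_eq {V : Type} [Finite V] (G : SimpleGraph V) (h : ℕ) :
    centerPoolRep G h = graphColorMultiset G h := by
  unfold centerPoolRep graphColorMultiset
  refine Multiset.map_congr rfl ?_
  intro v _
  exact wlColor_ball G v h h 0 v _ (by omega) (self_mem_ball G v 0)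

/-- If the multisets of `h`-round WL colors of `G₁` and `G₂` differ, then
the multisets `{{c_h^{B_G(v,h)}(v) : v ∈ G}}` of root colors computed within each vertex's own
height-`h` rooted subgraph also differ: NGNN with center pooling is at least as powerful as
1-WL. -/
theorem ngnn_at_least_as_powerful_as_wl {V₁ V₂ : Type} [Finite V₁] [Finite V₂]
    (G₁ : SimpleGraph V₁) (G₂ : SimpleGraph V₂) (h : ℕ)
    (hwl : graphColorMultiset G₁ h ≠ graphColorMultiset G₂ h) :
    centerPoolRep G₁ h ≠ centerPoolRep G₂ h := by
  rwa [centerPoolRep_eq, centerPoolRep_eq]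
end

section
/- Fix a constant 0 < ε < 1. There exists N such that for every even integer n ≥ N there exist two non-isomorphic n-vertex 3-regular simple graphs G₁ and G₂ such that for every t ∈ ℕ the multiset of t-round WL colors of G₁ equals that of G₂ (so 1-WL fails to distinguish them), yet the (h,L) subgraph-WL graph representations of G₁ and G₂ differ, where h = ⌈(1/2 + ε)·log n / log(2 − ε)⌉ and L = ⌈ε·log n / log(2 − ε)⌉. (Hence NGNN is strictly more powerful than 1-WL and message passing GNNs.) -/
/-- The common color of all vertices of a 3-regular graph. -/
def regColor : (t : ℕ) → WLColor t
  | 0 => ()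
  | t + 1 => (regColor t, Multiset.replicate 3 (regColor t))

lemma wlColor_regular {V : Type} [Finite V] (G : SimpleGraph V) (hG : IsRegularGraph G 3) (t : ℕ) :
    ∀ v, wlColor G t v = regColor t := by
  induction t with
  | zero => intro v; rfl
  | succ t ih =>
    intro v
    show (wlColor G t v, ((Set.toFinite {u | G.Adj v u}).toFinset.val).map (wlColor G t))
      = (regColor t, Multiset.replicate 3 (regColor t))
    have h1 : wlColor G t = fun _ => regColor t := funext ih
    rw [h1, Multiset.map_const']
    have h2 : (Set.toFinite {u | G.Adj v u}).toFinset.val.card = 3 := by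
      have h3 := hG v
      rw [← h3]
      exact (Nat.card_eq_card_finite_toFinset (Set.toFinite {u | G.Adj v u})).symm
    rw [h2]

lemma graphColorMultiset_regular {V : Type} [Finite V] (G : SimpleGraph V)
    (hG : IsRegularGraph G 3) (t : ℕ) :
    graphColorMultiset G t = Multiset.replicate (Nat.card V) (regColor t) := by
  unfold graphColorMultiset
  have h1 : wlColor G t = fun _ => regColor t := funext (wlColor_regular G hG t)
  rw [h1]
  rw [Multiset.map_const']
  congr 1
  exact (@Nat.card_eq_fintype_card V (Fintype.ofFinite V)).symm

lemma card_nodeRep {V : Type} [Finite V] (G : SimpleGraph V) (h L : ℕ) (w : V) :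
    (subgraphWLNodeRep G h L w).card = (ball G w h).ncard := by
  unfold subgraphWLNodeRep graphColorMultiset
  rw [Multiset.card_map, ← Nat.card_coe_set_eq]
  exact (@Nat.card_eq_fintype_card _ (Fintype.ofFinite _)).symm

lemma rep_ne_s13 {V : Type} [Finite V] (G₁ G₂ : SimpleGraph V) (h L : ℕ)
    (h1 : ∃ v, (ball G₁ v h).ncard ≤ 4) (h2 : ∀ v, 5 ≤ (ball G₂ v h).ncard) :
    subgraphWLGraphRep G₁ h L ≠ subgraphWLGraphRep G₂ h L := by
  intro he
  obtain ⟨v, hv⟩ := h1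
  have hm : subgraphWLNodeRep G₁ h L v ∈ subgraphWLGraphRep G₁ h L := by
    unfold subgraphWLGraphRep
    exact Multiset.mem_map_of_mem _ (by simp)
  rw [he] at hm
  unfold subgraphWLGraphRep at hm
  obtain ⟨w, -, hw⟩ := Multiset.mem_map.1 hm
  have := congrArg Multiset.card hw
  rw [card_nodeRep, card_nodeRep] at this
  have := h2 w
  omega

/-- The prism over a cycle of length `m`. -/
def prism (m : ℕ) : SimpleGraph (ZMod m × Bool) where
  Adj p q := p ≠ q ∧ ((p.2 = q.2 ∧ (q.1 = p.1 + 1 ∨ q.1 = p.1 - 1)) ∨ (p.1 = q.1 ∧ q.2 = !p.2))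
  symm := ⟨by
    rintro ⟨a, b⟩ ⟨c, d⟩ ⟨hne, h⟩
    refine ⟨hne.symm, ?_⟩
    rcases h with ⟨h1, h2 | h2⟩ | ⟨h1, h2⟩
    · left; simp_all
    · left; simp_all
    · right; simp_all⟩
  loopless := ⟨fun p h => h.1 rfl⟩

lemma zmod_facts (m : ℕ) (hm : 3 ≤ m) :
    (1 : ZMod m) ≠ 0 ∧ (2 : ZMod m) ≠ 0 := by
  constructor
  · intro h
    have := (ZMod.natCast_eq_zero_iff 1 m).1 (by simpa using h)
    have := Nat.le_of_dvd (by norm_num) this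
    omega
  · intro h
    have := (ZMod.natCast_eq_zero_iff 2 m).1 (by simpa using h)
    have := Nat.le_of_dvd (by norm_num) this
    omega

lemma zmod_ne (m : ℕ) (hm : 3 ≤ m) (a : ZMod m) :
    a + 1 ≠ a ∧ a - 1 ≠ a ∧ a + 1 ≠ a - 1 := by
  obtain ⟨h1, h2⟩ := zmod_facts m hm
  refine ⟨by simpa using h1, by simpa using h1, ?_⟩
  intro h
  apply h2
  linear_combination h

lemma prism_adj (m : ℕ) (hm : 3 ≤ m) (a : ZMod m) (b : Bool) (q : ZMod m × Bool) :
    (prism m).Adj (a, b) q ↔ q = (a + 1, b) ∨ q = (a - 1, b) ∨ q = (a, !b) := by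
  obtain ⟨h1, h2, h3⟩ := zmod_ne m hm a
  obtain ⟨c, d⟩ := q
  simp only [prism, Prod.mk.injEq]
  constructor
  · rintro ⟨-, ⟨rfl, h | h⟩ | ⟨rfl, h⟩⟩ <;> simp_all
  · rintro (⟨rfl, rfl⟩ | ⟨rfl, rfl⟩ | ⟨rfl, rfl⟩)
    · simpa using h1
    · simpa [eq_comm] using h2
    · simp

lemma prism_regular (m : ℕ) (hm : 3 ≤ m) : IsRegularGraph (prism m) 3 := by
  rintro ⟨a, b⟩
  obtain ⟨h1, h2, h3⟩ := zmod_ne m hm a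
  have : {u | (prism m).Adj (a, b) u} = (({(a + 1, b), (a - 1, b), (a, !b)} : Finset _) : Set _) := by
    ext q
    simp [prism_adj m hm]
  show Nat.card ({u | (prism m).Adj (a, b) u} : Set _) = 3
  rw [this, Nat.card_coe_set_eq, Set.ncard_coe_finset]
  rw [Finset.card_eq_three]
  exact ⟨_, _, _, by simp [h3], by simp, by simp, rfl⟩

lemma prism_five (m : ℕ) (hm : 3 ≤ m) (v : ZMod m × Bool) :
    ∃ s : Finset (ZMod m × Bool), s.card = 5 ∧
      ∀ u ∈ s, ∃ p : (prism m).Walk v u, p.length ≤ 2 := by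
  obtain ⟨a, b⟩ := v
  obtain ⟨h1, h2, h3⟩ := zmod_ne m hm a
  refine ⟨{(a + 1, b), (a - 1, b), (a, b), (a, !b), (a + 1, !b)}, ?_, ?_⟩
  · rw [Finset.card_insert_of_notMem, Finset.card_insert_of_notMem, Finset.card_insert_of_notMem,
      Finset.card_insert_of_notMem, Finset.card_singleton] <;> simp [h1, h2, h3, eq_comm]
    all_goals first
      | exact fun h => (zmod_facts m hm).1 h.symm
      | exact fun h => h2 h.symm
  · have e1 : (prism m).Adj (a, b) (a + 1, b) := by rw [prism_adj m hm]; simp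
    have e2 : (prism m).Adj (a, b) (a - 1, b) := by rw [prism_adj m hm]; simp
    have e3 : (prism m).Adj (a, b) (a, !b) := by rw [prism_adj m hm]; simp
    have e4 : (prism m).Adj (a + 1, b) (a + 1, !b) := by rw [prism_adj m hm]; simp
    intro u hu
    simp only [Finset.mem_insert, Finset.mem_singleton] at hu
    rcases hu with rfl | rfl | rfl | rfl | rfl
    · exact ⟨e1.toWalk, by simp⟩
    · exact ⟨e2.toWalk, by simp⟩
    · exact ⟨.nil, by simp⟩
    · exact ⟨e3.toWalk, by simp⟩
    · exact ⟨.cons e1 e4.toWalk, by simp⟩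

/-- Disjoint union of a complete graph on four vertices and a prism. -/
def k4prism (m : ℕ) : SimpleGraph (Fin 4 ⊕ (ZMod m × Bool)) :=
  (⊤ : SimpleGraph (Fin 4)) ⊕g prism m

lemma k4prism_regular (m : ℕ) (hm : 3 ≤ m) : IsRegularGraph (k4prism m) 3 := by
  rintro (i | p)
  · have : {u | (k4prism m).Adj (.inl i) u} = Sum.inl '' {j : Fin 4 | j ≠ i} := by
      ext (j | q) <;> simp [k4prism, eq_comm]
    show Nat.card ({u | (k4prism m).Adj (.inl i) u} : Set _) = 3
    rw [this, Nat.card_coe_set_eq, Set.ncard_image_of_injective _ Sum.inl_injective,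
      Set.ncard_eq_toFinset_card']
    clear this; revert i; decide
  · have : {u | (k4prism m).Adj (.inr p) u} = Sum.inr '' {q | (prism m).Adj p q} := by
      ext (j | q) <;> simp [k4prism]
    show Nat.card ({u | (k4prism m).Adj (.inr p) u} : Set _) = 3
    rw [this, Nat.card_coe_set_eq, Set.ncard_image_of_injective _ Sum.inr_injective]
    exact prism_regular m hm p

lemma k4prism_walk (m : ℕ) {u v : Fin 4 ⊕ (ZMod m × Bool)} (p : (k4prism m).Walk u v)
    (hu : u ∈ Set.range (Sum.inl : Fin 4 → Fin 4 ⊕ (ZMod m × Bool))) :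
    v ∈ Set.range (Sum.inl : Fin 4 → Fin 4 ⊕ (ZMod m × Bool)) := by
  induction p with
  | nil => exact hu
  | @cons a b c h p ih =>
    apply ih
    obtain ⟨i, rfl⟩ := hu
    rcases b with j | q
    · simp
    · simp [k4prism] at h

lemma comap_regular {V W : Type} (e : V ≃ W) (G : SimpleGraph W) (hG : IsRegularGraph G 3) :
    IsRegularGraph (G.comap e) 3 := by
  intro v
  rw [← hG (e v)]
  exact Nat.card_congr (e.subtypeEquiv (fun _ => Iff.rfl))

/-- Fix `0 < ε < 1`.  There is `N` such that for every even `n ≥ N` there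
exist two non-isomorphic `n`-vertex 3-regular simple graphs `G₁, G₂` with equal multisets of
`t`-round WL colors for every `t` (1-WL fails), whose `(h,L)` subgraph-WL graph
representations nevertheless differ, where `h = ⌈(1/2 + ε) log n / log(2-ε)⌉` and
`L = ⌈ε log n / log(2-ε)⌉`: NGNN is strictly more powerful than 1-WL. -/
theorem ngnn_strictly_more_powerful_than_wl (ε : ℝ) (hε0 : 0 < ε) (hε1 : ε < 1) :
    ∃ N : ℕ, ∀ n : ℕ, N ≤ n → Even n →
      ∃ G₁ G₂ : SimpleGraph (Fin n), IsRegularGraph G₁ 3 ∧ IsRegularGraph G₂ 3 ∧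
        (¬ Nonempty (G₁ ≃g G₂)) ∧
        (∀ t : ℕ, graphColorMultiset G₁ t = graphColorMultiset G₂ t) ∧
        subgraphWLGraphRep G₁ (⌈((1 : ℝ) / 2 + ε) * Real.log n / Real.log (2 - ε)⌉₊)
            (⌈ε * Real.log n / Real.log (2 - ε)⌉₊) ≠
          subgraphWLGraphRep G₂ (⌈((1 : ℝ) / 2 + ε) * Real.log n / Real.log (2 - ε)⌉₊)
            (⌈ε * Real.log n / Real.log (2 - ε)⌉₊) := by
  refine ⟨10, fun n hn hev => ?_⟩
  have hh : 2 ≤ ⌈((1 : ℝ) / 2 + ε) * Real.log n / Real.log (2 - ε)⌉₊ := by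
    apply Nat.succ_le_of_lt
    rw [Nat.lt_ceil]
    have h1 : 0 < Real.log (2 - ε) := Real.log_pos (by linarith)
    have h2 : Real.log (2 - ε) ≤ Real.log 2 := Real.log_le_log (by linarith) (by linarith)
    have h3 : Real.log 4 < Real.log n := by
      apply Real.log_lt_log (by norm_num)
      have : (10 : ℝ) ≤ n := by exact_mod_cast hn
      linarith
    have h4 : Real.log 4 = 2 * Real.log 2 := by
      rw [show (4 : ℝ) = 2 ^ 2 by norm_num, Real.log_pow]; norm_num
    rw [lt_div_iff₀ h1]
    push_cast
    nlinarith
  generalize ⌈((1 : ℝ) / 2 + ε) * Real.log n / Real.log (2 - ε)⌉₊ = h at hh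
  generalize ⌈ε * Real.log n / Real.log (2 - ε)⌉₊ = L
  obtain ⟨m, rfl⟩ := hev
  obtain ⟨k, rfl⟩ : ∃ k, m = k + 2 := ⟨m - 2, by omega⟩
  have hk : 3 ≤ k := by omega
  haveI : NeZero k := ⟨by omega⟩
  let e₁ : Fin (k + 2 + (k + 2)) ≃ Fin 4 ⊕ (ZMod k × Bool) :=
    (Fintype.equivFinOfCardEq (by simp [ZMod.card]; ring)).symm
  let e₂ : Fin (k + 2 + (k + 2)) ≃ ZMod (k + 2) × Bool :=
    (Fintype.equivFinOfCardEq (by simp [ZMod.card]; ring)).symm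
  have r₁ := comap_regular e₁ _ (k4prism_regular k hk)
  have r₂ := comap_regular e₂ _ (prism_regular (k + 2) (by omega))
  have c₁ : ({u | ((k4prism k).comap e₁).Reachable (e₁.symm (.inl 0)) u}).ncard ≤ 4 := by
    have hsub : {u | ((k4prism k).comap e₁).Reachable (e₁.symm (.inl 0)) u} ⊆
        (fun i : Fin 4 => e₁.symm (.inl i)) '' Set.univ := by
      intro u ⟨p⟩
      have := k4prism_walk k (p.map (SimpleGraph.Iso.comap e₁ (k4prism k)).toHom)
        ⟨0, (e₁.apply_symm_apply _).symm⟩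
      obtain ⟨i, hi⟩ := this
      refine ⟨i, trivial, ?_⟩
      show e₁.symm (.inl i) = u
      rw [hi]
      exact e₁.symm_apply_apply u
    refine (Set.ncard_le_ncard hsub).trans ((Set.ncard_image_le).trans ?_)
    simp [Set.ncard_univ]
  have c₂ : ∀ v, 5 ≤ (ball ((prism (k + 2)).comap e₂) v h).ncard := by
    intro v
    obtain ⟨s, hs, hw⟩ := prism_five (k + 2) (by omega) (e₂ v)
    have hsub : ((s.map e₂.symm.toEmbedding : Finset _) : Set _) ⊆
        ball ((prism (k + 2)).comap e₂) v h := by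
      intro u hu
      simp only [Finset.coe_map, Set.mem_image] at hu
      obtain ⟨w, hws, rfl⟩ := hu
      obtain ⟨p, hp⟩ := hw w hws
      have : ∃ q : ((prism (k + 2)).comap e₂).Walk v (e₂.symm w), q.length ≤ 2 :=
        ⟨(p.map (SimpleGraph.Iso.comap e₂ (prism (k + 2))).symm.toHom).copy
          (e₂.symm_apply_apply v) rfl, (((SimpleGraph.Walk.length_copy _ _ _).trans (SimpleGraph.Walk.length_map _ _)).le).trans hp⟩
      obtain ⟨q, hq⟩ := this
      exact ⟨⟨q⟩, (SimpleGraph.dist_le q).trans (hq.trans hh)⟩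
    have := Set.ncard_le_ncard hsub
    rwa [Set.ncard_coe_finset, Finset.card_map, hs] at this
  refine ⟨(k4prism k).comap e₁, (prism (k + 2)).comap e₂, r₁, r₂, ?_, ?_, ?_⟩
  · rintro ⟨f⟩
    have h5 := c₂ (f (e₁.symm (.inl 0)))
    have hsub : f.symm '' (ball ((prism (k + 2)).comap e₂) (f (e₁.symm (.inl 0))) h) ⊆
        {u | ((k4prism k).comap e₁).Reachable (e₁.symm (.inl 0)) u} := by
      rintro _ ⟨u, hu, rfl⟩
      have := hu.1.map f.symm.toHom
      simpa using this
    have := Set.ncard_le_ncard hsub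
    rw [Set.ncard_image_of_injective _ f.symm.injective] at this
    omega
  · intro t
    rw [graphColorMultiset_regular _ r₁, graphColorMultiset_regular _ r₂]
  · refine rep_ne_s13 _ _ h L ⟨e₁.symm (.inl 0), ?_⟩ c₂
    exact (Set.ncard_le_ncard (fun u hu => hu.1)).trans c₁
end
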